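/- Let P ⊆ ℝ^d be a d-dimensional simplicial reflexive polytope with d ≥ 3 and exactly 3d−1 vertices, and suppose ν_P is a vertex of P. Then either d is even and P splits into (d−2)/2 copies of V2 and one copy of the pentagon Ṽ2, or d is odd and P splits into (d−3)/2 copies of V2 and one copy of the 3-polytope Q3'. -/

import Mathlib

noncomputable section

/-- The standard inner product on `ℝ^d`. -/
def dotp {d : ℕ} (x y : Fin d → ℝ) : ℝ := ∑ i, x i * y i

/-- `x` is a point of the lattice `ℤ^d`. -/
def IsLP {d : ℕ} (x : Fin d → ℝ) : Prop := ∀ i, ∃ n : ℤ, x i = (n : ℝ)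

/-- A lattice polytope: convex hull of finitely many lattice points. -/
def IsLatticePolytope {d : ℕ} (P : Set (Fin d → ℝ)) : Prop :=
  ∃ V : Finset (Fin d → ℝ), (∀ v ∈ V, IsLP v) ∧ P = convexHull ℝ (V : Set (Fin d → ℝ))

/-- The dual polytope `P* = {x | ⟨x,y⟩ ≤ 1 ∀ y ∈ P}`. -/
def dualPolytope {d : ℕ} (P : Set (Fin d → ℝ)) : Set (Fin d → ℝ) :=
  {x | ∀ y ∈ P, dotp x y ≤ 1}

/-- `P` is a reflexive polytope: a (`d`-dimensional) lattice polytope with `0` in its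
interior whose dual is again a lattice polytope. -/
def IsReflexive {d : ℕ} (P : Set (Fin d → ℝ)) : Prop :=
  IsLatticePolytope P ∧ (0 : Fin d → ℝ) ∈ interior P ∧ IsLatticePolytope (dualPolytope P)

/-- `F` is a facet of `P` with (uniquely determined) outer normal `u`, normalized by
`⟨u, F⟩ = 1` (possible since `0` is in the interior of `P`). -/
def IsFacetNormal {d : ℕ} (P F : Set (Fin d → ℝ)) (u : Fin d → ℝ) : Prop :=
  F.Nonempty ∧ (∀ y ∈ P, dotp u y ≤ 1) ∧ F = {y ∈ P | dotp u y = 1} ∧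
    Module.finrank ℝ (vectorSpan ℝ F) = d - 1

/-- `F` is a facet of `P`. -/
def IsFacet {d : ℕ} (P F : Set (Fin d → ℝ)) : Prop := ∃ u, IsFacetNormal P F u

/-- `P` is simplicial: every facet has exactly `d` vertices. -/
def IsSimplicial {d : ℕ} (P : Set (Fin d → ℝ)) : Prop :=
  ∀ F, IsFacet P F → (Set.extremePoints ℝ F).ncard = d

/-- Vertices of the hexagon `V₂`. -/
def V2v : Set (Fin 2 → ℤ) := {![1,0], ![0,1], ![1,1], ![-1,0], ![0,-1], ![-1,-1]}

/-- Vertices of the pentagon `Ṽ₂`. -/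
def tV2v : Set (Fin 2 → ℤ) := {![1,0], ![0,1], ![1,1], ![-1,0], ![0,-1]}

/-- Vertices of the pentagon `E₁`. -/
def E1v : Set (Fin 2 → ℤ) := {![1,0], ![-1,2], ![-1,1], ![0,-1], ![1,-1]}

/-- Vertices of the pentagon `E₂`. -/
def E2v : Set (Fin 2 → ℤ) := {![1,0], ![0,1], ![-1,1], ![-1,-1], ![1,-1]}

/-- Vertices of the 3-polytope `Q₃`. -/
def Q3v : Set (Fin 3 → ℤ) :=
  {![1,0,0], ![-1,0,0], ![0,1,0], ![0,-1,0], ![1,1,0], ![-1,-1,0], ![0,0,1], ![0,0,-1]}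

/-- Vertices of the 3-polytope `Q₃'`. -/
def Q3'v : Set (Fin 3 → ℤ) :=
  {![1,0,0], ![-1,0,0], ![0,1,0], ![0,-1,0], ![1,1,0], ![-1,-1,0], ![0,0,1], ![1,0,-1]}

/-- Embed `ℤ²` into coordinates `o, o+1` of `ℝ^d`. -/
def embed2 (d o : ℕ) (v : Fin 2 → ℤ) : Fin d → ℝ :=
  fun i => if (i : ℕ) = o then (v 0 : ℝ) else if (i : ℕ) = o + 1 then (v 1 : ℝ) else 0

/-- Embed `ℤ³` into coordinates `0, 1, 2` of `ℝ^d`. -/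
def embed3 (d : ℕ) (v : Fin 3 → ℤ) : Fin d → ℝ :=
  fun i => if (i : ℕ) = 0 then (v 0 : ℝ) else if (i : ℕ) = 1 then (v 1 : ℝ)
    else if (i : ℕ) = 2 then (v 2 : ℝ) else 0

/-- Standard model of a polytope in `ℝ^d` that splits into a polygon with vertex set `Q`
(in coordinates `0,1`) and `(d-2)/2` copies of `V₂` (in the remaining coordinate pairs). -/
def splitModel2 (d : ℕ) (Q : Set (Fin 2 → ℤ)) : Set (Fin d → ℝ) :=
  convexHull ℝ (embed2 d 0 '' Q ∪ ⋃ j ∈ Finset.range ((d - 2) / 2), embed2 d (2 * j + 2) '' V2v)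

/-- Standard model of a polytope in `ℝ^d` that splits into a 3-polytope with vertex set `Q`
(in coordinates `0,1,2`) and `(d-3)/2` copies of `V₂` (in the remaining coordinate pairs). -/
def splitModel3 (d : ℕ) (Q : Set (Fin 3 → ℤ)) : Set (Fin d → ℝ) :=
  convexHull ℝ (embed3 d '' Q ∪ ⋃ j ∈ Finset.range ((d - 3) / 2), embed2 d (2 * j + 3) '' V2v)

/-- Standard model of a polytope in `ℝ^d` that splits into `d/2` copies of `V₂`. -/
def splitModelV2 (d : ℕ) : Set (Fin d → ℝ) :=
  convexHull ℝ (⋃ j ∈ Finset.range (d / 2), embed2 d (2 * j) '' V2v)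

/-- `φ` is a unimodular transformation: a linear automorphism of `ℝ^d` mapping the lattice
`ℤ^d` onto itself. `P` splits into given polytopes iff some unimodular transformation maps `P`
onto the corresponding standard model. -/
def Unimodular {d : ℕ} (φ : (Fin d → ℝ) ≃ₗ[ℝ] (Fin d → ℝ)) : Prop :=
  ∀ x, IsLP x ↔ IsLP (φ x)

/-!
Take a facet through `ν = ∑ v ∈ V, v`. By reflexivity its normal is integral on the vertices, which
therefore lie on the levels `1, 0, -1, -2, …`. There are `d` vertices on level `1`, and at most `d`
on level `0`, because each of them is the new vertex of one of the `d` adjacent facets. As `ν` has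
level `1`, so has the sum of all `3d - 1` vertices, and counting leaves no choice: `d` vertices on
level `0`, all others on level `-1`.

Among the facets through `ν` choose one of minimal volume. Crossing a ridge that contains `ν` then
preserves the volume, so the vertices `b i` of the facet form a lattice basis; level `0` consists of
the points `b (s i) - b i` for a map `s` without fixed points, and level `-1` of points `-b k`.
Writing `ν = b o` as the sum of all vertices and comparing coordinates determines the cardinalities
of the fibres of `s`. They force `s` to be an involution, except possibly at one index `r` outside
its image, with `s r = o`. A pair `{i, s i}` away from the exception contributes a hexagon `V2`;
what remains around `o` is the pentagon `Ṽ2` if `s` is an involution and `Q3'` otherwise.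
-/

section BasisExchange

variable {K ι E : Type*} [Field K] [AddCommGroup E] [Module K E]

theorem det_update_self [Fintype ι] [DecidableEq ι] (b : Module.Basis ι K E) (i : ι) (x : E) :
    b.det (Function.update b i x) = b.repr x i := by
  rw [Module.Basis.det_apply, Module.Basis.toMatrix_update, Module.Basis.toMatrix_self,
    ← Matrix.cramer_apply]
  simp

theorem exists_basis_eq_update [Finite ι] [DecidableEq ι] (b : Module.Basis ι K E) {i : ι} {x : E}
    (hx : b.repr x i ≠ 0) :
    ∃ b' : Module.Basis ι K E, ⇑b' = Function.update b i x := by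
  have := Fintype.ofFinite ι
  have hdet : IsUnit (b.det (Function.update b i x)) := by
    rw [det_update_self]
    exact hx.isUnit
  obtain ⟨hli, hsp⟩ := (b.is_basis_iff_det (v := Function.update b i x)).2 hdet
  exact ⟨.mk hli hsp.ge, Module.Basis.coe_mk _ _⟩

theorem sumCoords_eq_sub_of_forall_ne {b b' : Module.Basis ι K E} {i : ι}
    (h : ∀ j ≠ i, b' j = b j) (hi : b.repr (b' i) i ≠ 0) (x : E) :
    b'.sumCoords x =
      b.sumCoords x - (b.sumCoords (b' i) - 1) / b.repr (b' i) i * b.repr x i := by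
  classical
  set t := (b.sumCoords (b' i) - 1) / b.repr (b' i) i with ht
  have : b'.sumCoords = b.sumCoords - t • b.coord i := by
    refine b'.ext fun j => ?_
    rcases eq_or_ne j i with rfl | hj
    · simp [ht, div_mul_cancel₀ _ hi]
    · rw [b'.sumCoords_self_apply, h j hj]
      simp [hj]
  simp [this]

end BasisExchange

section BasisCoordinates

variable {ι E : Type*} [AddCommGroup E] [Module ℝ E] (b : Module.Basis ι ℝ E)

theorem repr_apply_nonneg (i j : ι) : 0 ≤ b.repr (b j) i := by
  classical
  rw [b.repr_self_apply]
  split_ifs <;> norm_num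

theorem repr_apply_sub_apply_neg {i j : ι} (h : i ≠ j) : b.repr (b i - b j) j < 0 := by
  classical
  rw [map_sub, Finsupp.sub_apply, b.repr_self_apply, b.repr_self_apply, if_neg h, if_pos rfl]
  norm_num

theorem sumCoords_apply_sub_apply (i j : ι) : b.sumCoords (b i - b j) = 0 := by
  rw [map_sub, b.sumCoords_self_apply, b.sumCoords_self_apply, sub_self]

theorem sumCoords_eq_sum_repr [Fintype ι] (v : E) : b.sumCoords v = ∑ i, b.repr v i := by
  simp

theorem exists_repr_neg {v : E} (hv : v ≠ 0) (h0 : b.sumCoords v = 0) : ∃ i, b.repr v i < 0 := by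
  by_contra! h
  rw [Module.Basis.coe_sumCoords] at h0
  have hsupp := (Finset.sum_eq_zero_iff_of_nonneg fun i _ => h i).1 h0
  have hrepr (i : ι) : b.repr v i = 0 :=
    by_contra fun hi => hi (hsupp i (Finsupp.mem_support_iff.2 hi))
  exact hv (b.ext_elem fun i => by simpa using hrepr i)

theorem exists_eq_of_repr_nonneg {w : E} (hw : ∀ j, 0 ≤ b.repr w j)
    (hint : ∀ j, ∃ n : ℤ, b.repr w j = n) (h1 : b.sumCoords w = 1) : ∃ k, w = b k := by
  obtain ⟨k, hk⟩ : ∃ k, b.repr w k ≠ 0 := by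
    by_contra! h
    have hw0 : w = 0 := b.ext_elem fun i => by simp [h i]
    rw [hw0, map_zero] at h1
    exact zero_ne_one h1
  refine ⟨k, by_contra fun hne => ?_⟩
  obtain ⟨j, hj⟩ := exists_repr_neg b (sub_ne_zero.2 hne)
    (by rw [map_sub, h1, b.sumCoords_self_apply, sub_self])
  obtain ⟨n, hn⟩ := hint j
  have hwj := hw j
  classical
  rw [map_sub, Finsupp.sub_apply, b.repr_self_apply] at hj
  split_ifs at hj with hjk
  · subst hjk
    rw [hn] at hj hk hwj
    norm_cast at hj hk hwj
    omega
  · linarith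

end BasisCoordinates

section FacetBases

variable {ι E : Type*} [Fintype ι] [AddCommGroup E] [Module ℝ E]
  {L : AddSubgroup E} {V : Finset E} {b b' : Module.Basis ι ℝ E}

/-- The vectors of `b` are the vertices of a simplicial facet of the polytope with vertex set `V`.
The outer normal of this facet, normalized to be `1` on it, is `b.sumCoords`. -/
structure IsFacetBasis (V : Finset E) (b : Module.Basis ι ℝ E) : Prop where
  mem : ∀ i, b i ∈ V
  sumCoords_le : ∀ v ∈ V, b.sumCoords v ≤ 1

/-- The combinatorial content of `V` being the vertex set of a simplicial reflexive polytope with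
respect to the lattice `L`: `0` is an interior point, the facets with linearly independent vertices
indexed by `ι` have no further vertices, and their normals are integral on `L`. -/
structure IsSimplicialReflexive (ι : Type*) [Fintype ι] (L : AddSubgroup E) (V : Finset E) :
    Prop where
  mem_lattice : ∀ v ∈ V, v ∈ L
  zero_notMem : (0 : E) ∉ V
  exists_neg : ∀ u : E →ₗ[ℝ] ℝ, u ≠ 0 → ∃ v ∈ V, u v < 0
  mem_range : ∀ b : Module.Basis ι ℝ E, IsFacetBasis V b →
    ∀ v ∈ V, b.sumCoords v = 1 → v ∈ Set.range b
  integral : ∀ b : Module.Basis ι ℝ E, IsFacetBasis V b →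
    ∀ x ∈ L, ∃ n : ℤ, b.sumCoords x = n

/-- `b'` spans the facet adjacent to the facet of `b` along the ridge opposite to `b i`. -/
structure IsAdjacent (V : Finset E) (b b' : Module.Basis ι ℝ E) (i : ι) : Prop where
  isFacetBasis : IsFacetBasis V b'
  apply_of_ne : ∀ j ≠ i, b' j = b j
  repr_neg : b.repr (b' i) i < 0

theorem IsSimplicialReflexive.sumCoords_lt_one (H : IsSimplicialReflexive ι L V)
    (hb : IsFacetBasis V b) {v : E} (hv : v ∈ V) {i : ι} (hi : b.repr v i < 0) :
    b.sumCoords v < 1 := by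
  refine (hb.sumCoords_le v hv).lt_of_ne fun h => ?_
  obtain ⟨j, rfl⟩ := H.mem_range b hb v hv h
  exact (repr_apply_nonneg b i j).not_gt hi

/-- Among the vertices `v` beyond the ridge, the next facet picks up the one minimizing the slope
`(1 - ℓ v) / -(c_i v)`, where `ℓ` is the facet normal and `c_i` the coordinate along `b i`. -/
theorem IsSimplicialReflexive.exists_isAdjacent (H : IsSimplicialReflexive ι L V)
    (hb : IsFacetBasis V b) (i : ι) : ∃ b' : Module.Basis ι ℝ E, IsAdjacent V b b' i := by
  classical
  obtain ⟨v₀, hv₀, hneg₀⟩ := H.exists_neg (b.coord i) fun h => by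
    simpa using LinearMap.congr_fun h (b i)
  obtain ⟨n, hn, hmin⟩ := (V.filter fun v => b.repr v i < 0).exists_min_image
    (fun v => (1 - b.sumCoords v) / -b.repr v i) ⟨v₀, by simpa using ⟨hv₀, hneg₀⟩⟩
  obtain ⟨hnV, hneg⟩ := Finset.mem_filter.1 hn
  obtain ⟨b', hb'⟩ := exists_basis_eq_update b hneg.ne
  have hi : b' i = n := by simp [hb']
  have hne : ∀ j ≠ i, b' j = b j := fun j hj => by simp [hb', hj]
  set t := (1 - b.sumCoords n) / -b.repr n i with ht
  have ht0 : 0 ≤ t := div_nonneg (by linarith [hb.sumCoords_le n hnV]) (by linarith)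
  have hsum (x : E) : b'.sumCoords x = b.sumCoords x - t * b.repr x i := by
    rw [sumCoords_eq_sub_of_forall_ne hne (by rw [hi]; exact hneg.ne), hi, ht, ← neg_div_neg_eq,
      neg_sub]
  refine ⟨b', ⟨fun j => ?_, fun v hv => ?_⟩, hne, hi ▸ hneg⟩
  · rcases eq_or_ne j i with rfl | hj
    exacts [hi ▸ hnV, hne j hj ▸ hb.mem j]
  · rw [hsum]
    rcases lt_or_ge (b.repr v i) 0 with hv0 | hv0
    · have := hmin v (Finset.mem_filter.2 ⟨hv, hv0⟩)
      rw [le_div_iff₀ (by linarith)] at this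
      linarith
    · linarith [hb.sumCoords_le v hv, mul_nonneg ht0 hv0]

theorem IsSimplicialReflexive.exists_sumCoords_eq_sub (H : IsSimplicialReflexive ι L V)
    (hb : IsFacetBasis V b) {i : ι} (hb' : IsAdjacent V b b' i) :
    ∃ t : ℕ, 0 < t ∧ ∀ x, b'.sumCoords x = b.sumCoords x - t * b.repr x i := by
  classical
  have hsum := sumCoords_eq_sub_of_forall_ne hb'.apply_of_ne hb'.repr_neg.ne
  set t := (b.sumCoords (b' i) - 1) / b.repr (b' i) i
  have ht : 0 < t := div_pos_of_neg_of_neg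
    (sub_neg.2 (H.sumCoords_lt_one hb (hb'.isFacetBasis.mem i) hb'.repr_neg)) hb'.repr_neg
  obtain ⟨m, hm⟩ := H.integral b' hb'.isFacetBasis (b i) (H.mem_lattice _ (hb.mem i))
  have htm : t = (1 - m : ℤ) := by
    rw [hsum, b.sumCoords_self_apply, b.repr_self_apply, if_pos rfl] at hm
    push_cast
    linarith
  have hm0 : 0 < 1 - m := by exact_mod_cast htm ▸ ht
  lift 1 - m to ℕ using hm0.le with k
  exact ⟨k, by exact_mod_cast hm0, fun x => by rw [hsum, htm, Int.cast_natCast]⟩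

theorem IsSimplicialReflexive.eq_of_sumCoords_eq_zero (H : IsSimplicialReflexive ι L V)
    (hb : IsFacetBasis V b) {i : ι} (hb' : IsAdjacent V b b' i) {v : E} (hv : v ∈ V)
    (h0 : b.sumCoords v = 0) (hneg : b.repr v i < 0) : v = b' i := by
  obtain ⟨t, ht, hsum⟩ := H.exists_sumCoords_eq_sub hb hb'
  have hpos : 0 < b'.sumCoords v := by
    rw [hsum, h0, zero_sub, neg_pos]
    exact mul_neg_of_pos_of_neg (by exact_mod_cast ht) hneg
  have hone : b'.sumCoords v = 1 := by
    obtain ⟨m, hm⟩ := H.integral b' hb'.isFacetBasis v (H.mem_lattice v hv)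
    have hle := hb'.isFacetBasis.sumCoords_le v hv
    rw [hm] at hpos hle ⊢
    norm_cast at hpos hle ⊢
    omega
  obtain ⟨j, rfl⟩ := H.mem_range b' hb'.isFacetBasis v hv hone
  by_contra hj
  have hji : j ≠ i := fun h => hj (congrArg b' h)
  rw [hb'.apply_of_ne j hji, b.sumCoords_self_apply] at h0
  exact one_ne_zero h0

end FacetBases

section Levels

/-- The indicator inequality `f ≤ 2 [f = 1] + [f = 0] - 1` holds pointwise, and the cardinalities
force equality after summation. -/
theorem card_filter_eq_and_neg_one_le {α : Type*} {s : Finset α} {f : α → ℝ} {d : ℕ}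
    (hf : ∀ x ∈ s, f x = 1 ∨ f x = 0 ∨ f x ≤ -1) (h₁ : (s.filter fun x => f x = 1).card ≤ d)
    (h₀ : (s.filter fun x => f x = 0).card ≤ d) (hs : 3 * d ≤ s.card + 1)
    (hsum : 1 ≤ ∑ x ∈ s, f x) :
    (s.filter fun x => f x = 0).card = d ∧ ∀ x ∈ s, -1 ≤ f x := by
  set g : α → ℝ := fun x => 2 * (if f x = 1 then 1 else 0) + (if f x = 0 then 1 else 0) - 1 - f x
  have hg : ∀ x ∈ s, 0 ≤ g x := fun x hx => by
    rcases hf x hx with h | h | h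
    · norm_num [g, h]
    · simp [g, h]
    · have h1 : f x ≠ 1 := by linarith
      have h0 : f x ≠ 0 := by linarith
      simp only [g, if_neg h1, if_neg h0]
      linarith
  have hgsum : ∑ x ∈ s, g x = 2 * (s.filter fun x => f x = 1).card +
      (s.filter fun x => f x = 0).card - s.card - ∑ x ∈ s, f x := by
    simp only [g, Finset.sum_sub_distrib, Finset.sum_add_distrib, ← Finset.mul_sum,
      Finset.sum_boole, Finset.sum_const, nsmul_eq_mul, mul_one]
  have hnonneg : 0 ≤ ∑ x ∈ s, g x := Finset.sum_nonneg hg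
  rify at h₁ h₀ hs
  refine ⟨?_, fun x hx => ?_⟩
  · rify; linarith
  · have hgx := (Finset.sum_eq_zero_iff_of_nonneg hg).1 (by linarith) x hx
    by_contra! hlt
    have h1 : f x ≠ 1 := by linarith
    have h0 : f x ≠ 0 := by linarith
    simp [g, h1, h0] at hgx
    linarith

variable {ι E : Type*} [Fintype ι] [AddCommGroup E] [Module ℝ E]
  {L : AddSubgroup E} {V : Finset E} {b : Module.Basis ι ℝ E} {nb : ι → Module.Basis ι ℝ E}

theorem IsSimplicialReflexive.sumCoords_trichotomy (H : IsSimplicialReflexive ι L V)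
    (hb : IsFacetBasis V b) {v : E} (hv : v ∈ V) :
    b.sumCoords v = 1 ∨ b.sumCoords v = 0 ∨ b.sumCoords v ≤ -1 := by
  obtain ⟨m, hm⟩ := H.integral b hb v (H.mem_lattice v hv)
  have hle := hb.sumCoords_le v hv
  rw [hm] at hle ⊢
  norm_cast at hle ⊢
  omega

theorem IsSimplicialReflexive.card_sumCoords_eq_one_le (H : IsSimplicialReflexive ι L V)
    (hb : IsFacetBasis V b) :
    (V.filter fun v => b.sumCoords v = 1).card ≤ Fintype.card ι := by
  classical
  refine (Finset.card_le_card fun v hv => ?_).trans (Finset.card_image_le (f := b))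
  obtain ⟨hv, h1⟩ := Finset.mem_filter.1 hv
  simpa using H.mem_range b hb v hv h1

theorem IsSimplicialReflexive.filter_sumCoords_eq_zero_subset [DecidableEq E]
    (H : IsSimplicialReflexive ι L V) (hb : IsFacetBasis V b)
    (hnb : ∀ i, IsAdjacent V b (nb i) i) :
    (V.filter fun v => b.sumCoords v = 0) ⊆ Finset.univ.image fun i => nb i i := by
  intro v hv
  obtain ⟨hv, h0⟩ := Finset.mem_filter.1 hv
  obtain ⟨i, hi⟩ := exists_repr_neg b (ne_of_mem_of_not_mem hv H.zero_notMem) h0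
  exact Finset.mem_image.2 ⟨i, Finset.mem_univ i,
    (H.eq_of_sumCoords_eq_zero hb (hnb i) hv h0 hi).symm⟩

variable {b' : Module.Basis ι ℝ E} {o : ι}

theorem IsSimplicialReflexive.card_filter_eq_and_neg_one_le (H : IsSimplicialReflexive ι L V)
    (hcard : 3 * Fintype.card ι ≤ V.card + 1) (hb : IsFacetBasis V b) (ho : b o = ∑ v ∈ V, v) :
    (V.filter fun v => b.sumCoords v = 0).card = Fintype.card ι ∧
      ∀ v ∈ V, -1 ≤ b.sumCoords v := by
  classical
  choose nb hnb using H.exists_isAdjacent hb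
  refine _root_.card_filter_eq_and_neg_one_le (fun v => H.sumCoords_trichotomy hb)
    (H.card_sumCoords_eq_one_le hb) ?_ hcard ?_
  · exact (Finset.card_le_card (H.filter_sumCoords_eq_zero_subset hb hnb)).trans
      Finset.card_image_le
  · rw [← map_sum, ← ho, b.sumCoords_self_apply]

theorem IsSimplicialReflexive.sumCoords_cases (H : IsSimplicialReflexive ι L V)
    (hcard : 3 * Fintype.card ι ≤ V.card + 1) (hb : IsFacetBasis V b) (ho : b o = ∑ v ∈ V, v)
    {v : E} (hv : v ∈ V) :
    b.sumCoords v = 1 ∨ b.sumCoords v = 0 ∨ b.sumCoords v = -1 :=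
  (H.sumCoords_trichotomy hb hv).imp_right <| Or.imp_right fun h =>
    h.antisymm ((H.card_filter_eq_and_neg_one_le hcard hb ho).2 v hv)

theorem IsSimplicialReflexive.adjacent_vertices (H : IsSimplicialReflexive ι L V)
    (hcard : 3 * Fintype.card ι ≤ V.card + 1) (hb : IsFacetBasis V b) (ho : b o = ∑ v ∈ V, v)
    (hnb : ∀ i, IsAdjacent V b (nb i) i) :
    (∀ i, b.sumCoords (nb i i) = 0) ∧ Function.Injective fun i => nb i i := by
  classical
  have hsub := H.filter_sumCoords_eq_zero_subset hb hnb
  have hcard0 := (H.card_filter_eq_and_neg_one_le hcard hb ho).1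
  have heq := Finset.eq_of_subset_of_card_le hsub (Finset.card_image_le.trans_eq hcard0.symm)
  refine ⟨fun i => ?_, ?_⟩
  · have hi : nb i i ∈ V.filter fun v => b.sumCoords v = 0 :=
      heq.symm ▸ Finset.mem_image_of_mem (fun i => nb i i) (Finset.mem_univ i)
    exact (Finset.mem_filter.1 hi).2
  · rw [← Set.injOn_univ, ← Finset.coe_univ, ← Finset.card_image_iff, ← heq, hcard0,
      Finset.card_univ]

theorem IsSimplicialReflexive.sumCoords_adjacent_eq_zero (H : IsSimplicialReflexive ι L V)
    (hcard : 3 * Fintype.card ι ≤ V.card + 1) (hb : IsFacetBasis V b) (ho : b o = ∑ v ∈ V, v)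
    {i : ι} (hb' : IsAdjacent V b b' i) : b.sumCoords (b' i) = 0 := by
  choose nb hnb using H.exists_isAdjacent hb
  have h0 := (H.adjacent_vertices hcard hb ho hnb).1 i
  rwa [← H.eq_of_sumCoords_eq_zero hb hb' ((hnb i).isFacetBasis.mem i) h0 (hnb i).repr_neg]

theorem IsSimplicialReflexive.repr_adjacent_nonneg (H : IsSimplicialReflexive ι L V)
    (hcard : 3 * Fintype.card ι ≤ V.card + 1) (hb : IsFacetBasis V b) (ho : b o = ∑ v ∈ V, v)
    {i j : ι} (hb' : IsAdjacent V b b' i) (hj : j ≠ i) : 0 ≤ b.repr (b' i) j := by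
  choose nb hnb using H.exists_isAdjacent hb
  have h0 := H.sumCoords_adjacent_eq_zero hcard hb ho hb'
  have hmem := hb'.isFacetBasis.mem i
  by_contra! hneg
  have hij : nb i i = nb j j :=
    (H.eq_of_sumCoords_eq_zero hb (hnb i) hmem h0 hb'.repr_neg).symm.trans
      (H.eq_of_sumCoords_eq_zero hb (hnb j) hmem h0 hneg)
  exact hj ((H.adjacent_vertices hcard hb ho hnb).2 hij).symm

end Levels

section MinimalFacets

variable {ι E : Type*} [Fintype ι] [AddCommGroup E] [Module ℝ E]
  {L : AddSubgroup E} {V : Finset E} {b b' : Module.Basis ι ℝ E} {o : ι}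

/-- `b` spans a facet through the vertex sum `b o = ∑ v ∈ V, v` whose normalized volume is minimal
among all such facets, volumes being compared by means of `b.det`. -/
structure IsMinimalFacetBasis [DecidableEq ι] (V : Finset E) (b : Module.Basis ι ℝ E) (o : ι) :
    Prop where
  isFacetBasis : IsFacetBasis V b
  apply_eq_sum : b o = ∑ v ∈ V, v
  one_le_abs_det : ∀ b' : Module.Basis ι ℝ E, IsFacetBasis V b' → b' o = ∑ v ∈ V, v →
    1 ≤ |b.det b'|

/-- For every `i`, the point `b (s i) - b i` is the only vertex on level `0` of the facet of `b`
whose coordinate along `b i` is negative. -/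
structure IsNeighborMap (V : Finset E) (b : Module.Basis ι ℝ E) (s : ι → ι) : Prop where
  apply_ne : ∀ i, s i ≠ i
  sub_mem : ∀ i, b (s i) - b i ∈ V
  eq_sub : ∀ i, ∀ v ∈ V, b.sumCoords v = 0 → b.repr v i < 0 → v = b (s i) - b i

theorem exists_isMinimalFacetBasis [DecidableEq ι] {b₀ : Module.Basis ι ℝ E}
    (hb₀ : IsFacetBasis V b₀) (ho : b₀ o = ∑ v ∈ V, v) :
    ∃ b : Module.Basis ι ℝ E, IsMinimalFacetBasis V b o := by
  set B : Set (ι → E) :=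
    {f | ∃ b : Module.Basis ι ℝ E, ⇑b = f ∧ IsFacetBasis V b ∧ b o = ∑ v ∈ V, v}
  have hfin : B.Finite := by
    refine (Fintype.piFinset fun _ : ι => V).finite_toSet.subset ?_
    rintro _ ⟨b, rfl, hb, -⟩
    simpa using hb.mem
  obtain ⟨_, ⟨b, rfl, hb, hbo⟩, hmin⟩ :=
    Set.exists_min_image B (fun f => |b₀.det f|) hfin ⟨_, b₀, rfl, hb₀, ho⟩
  refine ⟨b, hb, hbo, fun b' hb' ho' => ?_⟩
  have hpos : 0 < |b₀.det b| := abs_pos.2 (b₀.isUnit_det b).ne_zero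
  have hle : |b₀.det b| ≤ |b₀.det b'| := hmin _ ⟨b', rfl, hb', ho'⟩
  rw [← b₀.det_mul_det b b', abs_mul] at hle
  exact le_of_mul_le_mul_left (by simpa using hle) hpos

theorem IsAdjacent.det_eq [DecidableEq ι] {i : ι} (h : IsAdjacent V b b' i) :
    b.det b' = b.repr (b' i) i := by
  have hb' : ⇑b' = Function.update b i (b' i) := by
    ext1 j
    rcases eq_or_ne j i with rfl | hj
    · simp
    · simp [hj, h.apply_of_ne j hj]
  rw [hb', det_update_self, ← hb']

theorem IsSimplicialReflexive.exists_sumCoords_eq_sub_and_mul_eq_neg_one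
    (H : IsSimplicialReflexive ι L V) (hcard : 3 * Fintype.card ι ≤ V.card + 1)
    (hb : IsFacetBasis V b) (ho : b o = ∑ v ∈ V, v) {i : ι} (hb' : IsAdjacent V b b' i) :
    ∃ t : ℕ, (∀ x, b'.sumCoords x = b.sumCoords x - t * b.repr x i) ∧
      t * b.repr (b' i) i = -1 := by
  obtain ⟨t, -, hsum⟩ := H.exists_sumCoords_eq_sub hb hb'
  refine ⟨t, hsum, ?_⟩
  have h := hsum (b' i)
  rw [b'.sumCoords_self_apply, H.sumCoords_adjacent_eq_zero hcard hb ho hb'] at h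
  linarith

namespace IsMinimalFacetBasis

variable [DecidableEq ι]

theorem repr_adjacent_eq_neg_one_of_ne (H : IsSimplicialReflexive ι L V)
    (hcard : 3 * Fintype.card ι ≤ V.card + 1) (hb : IsMinimalFacetBasis V b o) {i : ι}
    (hi : i ≠ o) (hb' : IsAdjacent V b b' i) :
    b.repr (b' i) i = -1 ∧ ∀ x, b'.sumCoords x = b.sumCoords x - b.repr x i := by
  obtain ⟨t, hsum, ht⟩ := H.exists_sumCoords_eq_sub_and_mul_eq_neg_one hcard hb.isFacetBasis
    hb.apply_eq_sum hb'
  have hneg := hb'.repr_neg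
  have hle : 1 ≤ |b.repr (b' i) i| := hb'.det_eq ▸ hb.one_le_abs_det b' hb'.isFacetBasis
    ((hb'.apply_of_ne o hi.symm).trans hb.apply_eq_sum)
  rw [abs_of_neg hneg] at hle
  have ht1 : t = 1 := by
    have h1 : (t : ℝ) ≤ 1 := by nlinarith
    have h0 : t ≠ 0 := by rintro rfl; simp at ht
    norm_cast at h1
    omega
  subst ht1
  exact ⟨by simpa using ht, by simpa using hsum⟩

theorem of_isAdjacent (H : IsSimplicialReflexive ι L V)
    (hcard : 3 * Fintype.card ι ≤ V.card + 1) (hb : IsMinimalFacetBasis V b o) {i : ι}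
    (hi : i ≠ o) (hb' : IsAdjacent V b b' i) : IsMinimalFacetBasis V b' o := by
  refine ⟨hb'.isFacetBasis, (hb'.apply_of_ne o hi.symm).trans hb.apply_eq_sum,
    fun b'' hb'' ho'' => ?_⟩
  have h := hb.one_le_abs_det b'' hb'' ho''
  rwa [← b.det_mul_det b' b'', hb'.det_eq, (hb.repr_adjacent_eq_neg_one_of_ne H hcard hi hb').1,
    neg_one_mul, abs_neg] at h

/-- Away from `o`, a coordinate is the difference of the integral normals of two adjacent facets;
the coordinate at `o` is then the facet normal minus all other coordinates. -/
theorem exists_repr_eq_intCast (H : IsSimplicialReflexive ι L V)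
    (hcard : 3 * Fintype.card ι ≤ V.card + 1) (hb : IsMinimalFacetBasis V b o) (i : ι) {x : E}
    (hx : x ∈ L) : ∃ n : ℤ, b.repr x i = n := by
  have hne : ∀ i ≠ o, ∃ n : ℤ, b.repr x i = n := fun i hi => by
    obtain ⟨b', hb'⟩ := H.exists_isAdjacent hb.isFacetBasis i
    obtain ⟨p, hp⟩ := H.integral b hb.isFacetBasis x hx
    obtain ⟨q, hq⟩ := H.integral b' hb'.isFacetBasis x hx
    rw [(hb.repr_adjacent_eq_neg_one_of_ne H hcard hi hb').2, hp] at hq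
    exact ⟨p - q, by push_cast; linarith⟩
  rcases eq_or_ne i o with rfl | hi
  · obtain ⟨p, hp⟩ := H.integral b hb.isFacetBasis x hx
    choose n hn using hne
    refine ⟨p - ∑ j : {j // j ≠ i}, n j j.2, ?_⟩
    rw [sumCoords_eq_sum_repr, Fintype.sum_eq_add_sum_subtype_ne _ i] at hp
    push_cast
    rw [← hp, ← Finset.sum_congr rfl fun (j : {j // j ≠ i}) _ => hn j j.2, add_sub_cancel_right]
  · exact hne i hi

theorem repr_adjacent_eq_neg_one (H : IsSimplicialReflexive ι L V)
    (hcard : 3 * Fintype.card ι ≤ V.card + 1) (hb : IsMinimalFacetBasis V b o) {i : ι}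
    (hb' : IsAdjacent V b b' i) : b.repr (b' i) i = -1 := by
  obtain ⟨t, -, ht⟩ := H.exists_sumCoords_eq_sub_and_mul_eq_neg_one hcard hb.isFacetBasis
    hb.apply_eq_sum hb'
  obtain ⟨n, hn⟩ := hb.exists_repr_eq_intCast H hcard i (H.mem_lattice _ (hb'.isFacetBasis.mem i))
  have hneg := hb'.repr_neg
  rw [hn] at ht hneg ⊢
  norm_cast at ht hneg ⊢
  rcases Int.eq_one_or_neg_one_of_mul_eq_neg_one' ht with h | h <;> omega

end IsMinimalFacetBasis

theorem IsMinimalFacetBasis.exists_isNeighborMap [DecidableEq ι] (H : IsSimplicialReflexive ι L V)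
    (hcard : 3 * Fintype.card ι ≤ V.card + 1) (hb : IsMinimalFacetBasis V b o) :
    ∃ s, IsNeighborMap V b s := by
  choose nb hnb using H.exists_isAdjacent hb.isFacetBasis
  have hk (i : ι) : ∃ k, nb i i + b i = b k := by
    refine exists_eq_of_repr_nonneg b (fun j => ?_) (fun j => ?_) ?_
    · rw [map_add, Finsupp.add_apply, b.repr_self_apply]
      split_ifs with hij
      · rw [← hij, hb.repr_adjacent_eq_neg_one H hcard (hnb i)]
        norm_num
      · rw [add_zero]
        exact H.repr_adjacent_nonneg hcard hb.isFacetBasis hb.apply_eq_sum (hnb i) (Ne.symm hij)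
    · exact hb.exists_repr_eq_intCast H hcard j <| L.add_mem
        (H.mem_lattice _ ((hnb i).isFacetBasis.mem i)) (H.mem_lattice _ (hb.isFacetBasis.mem i))
    · rw [map_add, b.sumCoords_self_apply, H.sumCoords_adjacent_eq_zero hcard hb.isFacetBasis
        hb.apply_eq_sum (hnb i), zero_add]
  choose s hs using hk
  have hs' (i : ι) : nb i i = b (s i) - b i := eq_sub_of_add_eq (hs i)
  refine ⟨s, fun i h => ?_, fun i => hs' i ▸ (hnb i).isFacetBasis.mem i,
    fun i v hv h0 hneg => hs' i ▸ H.eq_of_sumCoords_eq_zero hb.isFacetBasis (hnb i) hv h0 hneg⟩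
  have hzero : nb i i = 0 := by rw [hs', h, sub_self]
  exact H.zero_notMem (hzero ▸ (hnb i).isFacetBasis.mem i)

end MinimalFacets

section LowestLevel

variable {ι E : Type*} [AddCommGroup E] [Module ℝ E]
  {L : AddSubgroup E} {V : Finset E} {b : Module.Basis ι ℝ E} {o : ι} {s : ι → ι}

theorem IsNeighborMap.exists_eq_sub (hs : IsNeighborMap V b s) {v : E} (hv : v ∈ V) (hv0 : v ≠ 0)
    (h0 : b.sumCoords v = 0) : ∃ i, v = b (s i) - b i :=
  (exists_repr_neg b hv0 h0).imp fun i hi => hs.eq_sub i v hv h0 hi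

namespace IsMinimalFacetBasis

variable [Fintype ι] [DecidableEq ι]

theorem repr_eq_zero_or_neg_one (H : IsSimplicialReflexive ι L V)
    (hcard : 3 * Fintype.card ι ≤ V.card + 1) (hb : IsMinimalFacetBasis V b o) {v : E}
    (hv : v ∈ V) (hlev : b.sumCoords v = -1) {i : ι} (hi : i ≠ o) :
    b.repr v i = 0 ∨ b.repr v i = -1 := by
  obtain ⟨b', hb'⟩ := H.exists_isAdjacent hb.isFacetBasis i
  have hsum := (hb.repr_adjacent_eq_neg_one_of_ne H hcard hi hb').2
  have hmin := hb.of_isAdjacent H hcard hi hb'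
  have hne : b'.sumCoords v ≠ 1 := fun h1 => by
    obtain ⟨k, rfl⟩ := H.mem_range b' hb'.isFacetBasis v hv h1
    rcases eq_or_ne k i with rfl | hk
    · rw [H.sumCoords_adjacent_eq_zero hcard hb.isFacetBasis hb.apply_eq_sum hb'] at hlev
      norm_num at hlev
    · rw [hb'.apply_of_ne k hk, b.sumCoords_self_apply] at hlev
      norm_num at hlev
  have hcases := (H.sumCoords_cases hcard hb'.isFacetBasis hmin.apply_eq_sum hv).resolve_left hne
  rw [hsum, hlev] at hcases
  rcases hcases with h | h
  · exact .inr (by linarith)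
  · exact .inl (by linarith)

/-- In the adjacent facet at `i`, the vertex `v` lies on level `0`, so it is the difference of two
vertices of that facet. -/
theorem exists_eq_sub_sub (H : IsSimplicialReflexive ι L V)
    (hcard : 3 * Fintype.card ι ≤ V.card + 1) (hb : IsMinimalFacetBasis V b o)
    (hs : IsNeighborMap V b s) {v : E} (hv : v ∈ V) (hlev : b.sumCoords v = -1) {i : ι}
    (hi : i ≠ o) (hvi : b.repr v i = -1) :
    ∃ k ≠ i, s k = i ∧ v = b (s i) - b i - b k := by
  obtain ⟨b', hb'⟩ := H.exists_isAdjacent hb.isFacetBasis i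
  obtain ⟨hneg, hsum⟩ := hb.repr_adjacent_eq_neg_one_of_ne H hcard hi hb'
  obtain ⟨s', hs'⟩ := (hb.of_isAdjacent H hcard hi hb').exists_isNeighborMap H hcard
  have hb'i : b' i = b (s i) - b i := hs.eq_sub i _ (hb'.isFacetBasis.mem i)
    (H.sumCoords_adjacent_eq_zero hcard hb.isFacetBasis hb.apply_eq_sum hb') hb'.repr_neg
  have hcoord : ∀ j ≠ i, b.repr (b' j) i = 0 := fun j hj => by
    rw [hb'.apply_of_ne j hj, b.repr_self_apply, if_neg hj]
  have hlev' : b'.sumCoords v = 0 := by rw [hsum, hlev, hvi, sub_self]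
  obtain ⟨k, hk⟩ := hs'.exists_eq_sub hv (ne_of_mem_of_not_mem hv H.zero_notMem) hlev'
  have hs'k : s' k = i := by
    by_contra hne
    rw [hk, map_sub, Finsupp.sub_apply, hcoord _ hne] at hvi
    rcases eq_or_ne k i with rfl | hki
    · rw [hneg] at hvi; norm_num at hvi
    · rw [hcoord k hki] at hvi; norm_num at hvi
  have hki : k ≠ i := fun h => hs'.apply_ne k (hs'k.trans h.symm)
  refine ⟨k, hki, by_contra fun hsk => ?_, by rw [hk, hs'k, hb'i, hb'.apply_of_ne k hki]⟩
  have hsub : b (s k) - b k = b' (s k) - b' k := by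
    rw [hb'.apply_of_ne k hki, hb'.apply_of_ne _ hsk]
  have heq : b (s k) - b k = v := by
    rw [hk, hsub]
    exact hs'.eq_sub k _ (hsub ▸ hs.sub_mem k) (sumCoords_apply_sub_apply b' _ _)
      (repr_apply_sub_apply_neg b' (hs.apply_ne k))
  rw [← heq, hsub, map_sub, Finsupp.sub_apply, hcoord _ hsk, hcoord k hki] at hvi
  norm_num at hvi

theorem exists_eq_neg (H : IsSimplicialReflexive ι L V)
    (hcard : 3 * Fintype.card ι ≤ V.card + 1) (hb : IsMinimalFacetBasis V b o)
    (hs : IsNeighborMap V b s) {v : E} (hv : v ∈ V) (hlev : b.sumCoords v = -1) :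
    ∃ k, v = -b k ∧ (k ≠ o → s (s k) = k) := by
  by_cases hall : ∀ i ≠ o, b.repr v i = 0
  · have hvo : b.repr v o = -1 := by
      rw [← hlev, sumCoords_eq_sum_repr, Fintype.sum_eq_single o hall]
    refine ⟨o, ?_, fun h => absurd rfl h⟩
    rw [← b.sum_repr v, Fintype.sum_eq_single o fun i hi => by rw [hall i hi, zero_smul], hvo,
      neg_one_smul]
  push Not at hall
  obtain ⟨i, hi, hvi⟩ := hall
  have hvi := (hb.repr_eq_zero_or_neg_one H hcard hv hlev hi).resolve_left hvi
  obtain ⟨k, hki, hsk, rfl⟩ := hb.exists_eq_sub_sub H hcard hs hv hlev hi hvi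
  obtain rfl | hk := eq_or_ne k (s i)
  · exact ⟨i, by abel, fun _ => hsk⟩
  exfalso
  have hsi : s i = o := by
    by_contra hne
    have h1 : b.repr (b (s i) - b i - b k) (s i) = 1 := by
      simp [(hs.apply_ne i).symm, hk]
    rcases hb.repr_eq_zero_or_neg_one H hcard hv hlev hne with h | h <;>
      rw [h1] at h <;> norm_num at h
  have hvk : b.repr (b (s i) - b i - b k) k = -1 := by
    simp [hk.symm, hki.symm]
  obtain ⟨k', -, -, heq⟩ := hb.exists_eq_sub_sub H hcard hs hv hlev (hsi ▸ hk) hvk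
  rw [heq, hsk, map_sub, map_sub, Finsupp.sub_apply, Finsupp.sub_apply, b.repr_self_apply,
    b.repr_self_apply, b.repr_self_apply, if_pos rfl, if_neg hki] at hvi
  split_ifs at hvi <;> norm_num at hvi

end IsMinimalFacetBasis

end LowestLevel

section Fibres

theorem involutive_of_bijective_of_forall_ne {α : Type*} {s : α → α} {o : α}
    (hs : Function.Bijective s) (hinv : ∀ k ≠ o, s (s k) = k) : Function.Involutive s := fun k => by
  by_contra hne
  have hk : k = o := by_contra fun h => hne (hinv k h)
  have hsk : s (s (s (s k))) = s (s k) := hinv _ (hk ▸ hne)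
  exact hne (hs.1 (hs.1 hsk))

variable {ι : Type*} [Fintype ι] [DecidableEq ι] {s : ι → ι} {o : ι} {K : Finset ι}

theorem exists_eq_compl_singleton_of_card_fibre
    (hfib : ∀ k, (Finset.univ.filter (s · = k)).card =
      (if k ∈ K then 1 else 0) + if k = o then 1 else 0) : ∃ m, K = {m}ᶜ := by
  have hsum : Fintype.card ι = K.card + 1 := by
    rw [← Finset.card_univ, Finset.card_eq_sum_card_fiberwise fun i _ => Finset.mem_univ (s i),
      Finset.sum_congr rfl fun k _ => hfib k, Finset.sum_add_distrib]
    simp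
  obtain ⟨m, hm⟩ := Finset.card_eq_one.1 (show Kᶜ.card = 1 by rw [Finset.card_compl]; omega)
  exact ⟨m, by rw [← hm, compl_compl]⟩

theorem involutive_or_exists_of_card_fibre (hne : ∀ i, s i ≠ i)
    (hfib : ∀ k, (Finset.univ.filter (s · = k)).card =
      (if k ∈ K then 1 else 0) + if k = o then 1 else 0)
    (hinv : ∀ k ∈ K, k ≠ o → s (s k) = k) :
    (K = {o}ᶜ ∧ Function.Involutive s) ∨
      ∃ r ≠ o, K = {r}ᶜ ∧ s r = o ∧ (∀ i, s i ≠ r) ∧ ∀ i ≠ r, s (s i) = i := by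
  obtain ⟨m, rfl⟩ := exists_eq_compl_singleton_of_card_fibre hfib
  simp only [Finset.mem_compl, Finset.mem_singleton] at hfib hinv
  rcases eq_or_ne m o with rfl | hmo
  · refine .inl ⟨rfl, involutive_of_bijective_of_forall_ne ?_ fun k hk => hinv k hk hk⟩
    refine Function.bijective_iff_existsUnique s |>.2 fun k => ?_
    obtain ⟨i, hi⟩ := Finset.card_eq_one.1 (show (Finset.univ.filter (s · = k)).card = 1 by
      rw [hfib]; split_ifs <;> simp_all)
    simp only [Finset.ext_iff, Finset.mem_filter, Finset.mem_univ, true_and,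
      Finset.mem_singleton] at hi
    exact ⟨i, (hi i).2 rfl, fun j hj => (hi j).1 hj⟩
  · have hinj : ∀ {i j}, s i = s j → s i ≠ o → i = j := fun {i j} hij hio => by
      have hle : (Finset.univ.filter (s · = s i)).card ≤ 1 := by
        rw [hfib, if_neg hio]
        split_ifs <;> simp
      exact Finset.card_le_one.1 hle i (by simp) j (by simp [hij])
    have hm : ∀ i, s i ≠ m := fun i hi => by
      have h0 : (Finset.univ.filter (s · = m)).card = 0 := by rw [hfib]; simp [hmo]
      exact Finset.notMem_empty i (Finset.card_eq_zero.1 h0 ▸ by simpa using hi)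
    have hsso : s (s o) = o := (hinj (hinv (s o) (hm o) (hne o)).symm (hne o)).symm
    refine .inr ⟨m, hmo, rfl, by_contra fun hsm => ?_, hm, fun i hi => ?_⟩
    · exact hm _ (hinj (hinv _ (hm m) hsm).symm hsm).symm
    · rcases eq_or_ne i o with rfl | hio
      exacts [hsso, hinv i hi hio]

end Fibres

section VertexDescription

theorem injective_apply_sub_apply {ι E : Type*} [AddCommGroup E] [Module ℝ E]
    (b : Module.Basis ι ℝ E) {s : ι → ι} (hs : ∀ i, s i ≠ i) :
    Function.Injective fun i => b (s i) - b i := fun i j hij => by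
  classical
  by_contra hne
  have hneg := repr_apply_sub_apply_neg b (hs i)
  rw [show b (s i) - b i = b (s j) - b j from hij, map_sub, Finsupp.sub_apply,
    b.repr_self_apply j, if_neg (Ne.symm hne), sub_zero] at hneg
  exact (repr_apply_nonneg b i (s j)).not_gt hneg

theorem injective_sumElim_vertices {ι E : Type*} [AddCommGroup E] [Module ℝ E]
    (b : Module.Basis ι ℝ E) {s : ι → ι} (hs : ∀ i, s i ≠ i) (K : Finset ι) :
    Function.Injective
      (Sum.elim b (Sum.elim (fun i => b (s i) - b i) fun k : K => -b k)) := by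
  have hlev₀ (i : ι) : b.sumCoords (b (s i) - b i) = 0 := sumCoords_apply_sub_apply b _ _
  have hlev₁ (k : ι) : b.sumCoords (-b k) = -1 := by rw [map_neg, b.sumCoords_self_apply]
  have hne {x y : E} (h : b.sumCoords x ≠ b.sumCoords y) : x ≠ y := ne_of_apply_ne b.sumCoords h
  refine b.injective.sumElim ((injective_apply_sub_apply b hs).sumElim
    (neg_injective.comp (b.injective.comp Subtype.val_injective)) fun i k => hne ?_) ?_
  · rw [hlev₀, hlev₁]
    norm_num
  · rintro i (j | k) <;> refine hne ?_
    · rw [Sum.elim_inl, hlev₀, b.sumCoords_self_apply]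
      norm_num
    · rw [Sum.elim_inr, hlev₁, b.sumCoords_self_apply]
      norm_num

variable {ι E : Type*} [Fintype ι] [DecidableEq ι] [AddCommGroup E] [Module ℝ E]
  {L : AddSubgroup E} {V : Finset E} {b : Module.Basis ι ℝ E} {o : ι} {s : ι → ι}
  {K : Finset ι}

namespace IsMinimalFacetBasis

theorem mem_iff (H : IsSimplicialReflexive ι L V) (hcard : 3 * Fintype.card ι ≤ V.card + 1)
    (hb : IsMinimalFacetBasis V b o) (hs : IsNeighborMap V b s) (hK : ∀ k, k ∈ K ↔ -b k ∈ V)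
    (v : E) :
    v ∈ V ↔ (∃ i, b i = v) ∨ (∃ i, b (s i) - b i = v) ∨ ∃ k ∈ K, -b k = v := by
  refine ⟨fun hv => ?_, ?_⟩
  · rcases H.sumCoords_cases hcard hb.isFacetBasis hb.apply_eq_sum hv with h | h | h
    · exact .inl (H.mem_range b hb.isFacetBasis v hv h)
    · obtain ⟨i, rfl⟩ := hs.exists_eq_sub hv (ne_of_mem_of_not_mem hv H.zero_notMem) h
      exact .inr (.inl ⟨i, rfl⟩)
    · obtain ⟨k, rfl, -⟩ := hb.exists_eq_neg H hcard hs hv h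
      exact .inr (.inr ⟨k, (hK k).2 hv, rfl⟩)
  · rintro (⟨i, rfl⟩ | ⟨i, rfl⟩ | ⟨k, hk, rfl⟩)
    exacts [hb.isFacetBasis.mem i, hs.sub_mem i, (hK k).1 hk]

theorem sum_apply_eq (H : IsSimplicialReflexive ι L V)
    (hcard : 3 * Fintype.card ι ≤ V.card + 1) (hb : IsMinimalFacetBasis V b o)
    (hs : IsNeighborMap V b s) (hK : ∀ k, k ∈ K ↔ -b k ∈ V) :
    ∑ i, b (s i) = b o + ∑ k ∈ K, b k := by
  set f : ι ⊕ ι ⊕ K → E := Sum.elim b (Sum.elim (fun i => b (s i) - b i) fun k => -b k)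
  have hV : V = Finset.univ.map ⟨f, injective_sumElim_vertices b hs.apply_ne K⟩ := by
    ext v
    simp [f, hb.mem_iff H hcard hs hK]
  have hsum : ∑ v ∈ V, v = ∑ a, f a := by
    conv_lhs => rw [hV]
    rw [Finset.sum_map]
    rfl
  rw [← hb.apply_eq_sum, Fintype.sum_sum_type, Fintype.sum_sum_type] at hsum
  simp only [f, Sum.elim_inl, Sum.elim_inr, Finset.sum_sub_distrib, Finset.sum_neg_distrib,
    Finset.sum_coe_sort K fun k => b k, add_sub_cancel, ← add_assoc] at hsum
  rw [hsum, neg_add_cancel_right]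

theorem card_fibre_eq (H : IsSimplicialReflexive ι L V)
    (hcard : 3 * Fintype.card ι ≤ V.card + 1) (hb : IsMinimalFacetBasis V b o)
    (hs : IsNeighborMap V b s) (hK : ∀ k, k ∈ K ↔ -b k ∈ V) (k : ι) :
    (Finset.univ.filter (s · = k)).card = (if k ∈ K then 1 else 0) + if k = o then 1 else 0 := by
  have h := congrArg (b.repr · k) (hb.sum_apply_eq H hcard hs hK)
  simp only [map_sum, map_add, Finsupp.add_apply, Finsupp.finsetSum_apply, b.repr_self_apply,
    Finset.sum_ite_eq'] at h
  rw [Finset.sum_boole, add_comm] at h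
  simp only [eq_comm (a := o)] at h
  exact_mod_cast h

end IsMinimalFacetBasis

end VertexDescription

section Unimodular

theorem isLP_single {d : ℕ} (i : Fin d) : IsLP (Pi.single i (1 : ℝ)) := fun j => by
  rcases eq_or_ne j i with rfl | h
  exacts [⟨1, by simp⟩, ⟨0, by simp [h]⟩]

/-- The lattice `ℤ^d` of the points satisfying `IsLP`, as a subgroup of `ℝ^d`. -/
def intLattice (d : ℕ) : AddSubgroup (Fin d → ℝ) where
  carrier := {x | IsLP x}
  zero_mem' := fun _ => ⟨0, by simp⟩
  add_mem' hx hy i := by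
    obtain ⟨m, hm⟩ := hx i
    obtain ⟨n, hn⟩ := hy i
    exact ⟨m + n, by simp [hm, hn]⟩
  neg_mem' hx i := by
    obtain ⟨m, hm⟩ := hx i
    exact ⟨-m, by simp [hm]⟩

theorem mem_closure_range_of_repr_intCast {ι E : Type*} [AddCommGroup E] [Module ℝ E]
    (b : Module.Basis ι ℝ E) {x : E} (hx : ∀ i, ∃ n : ℤ, b.repr x i = n) :
    x ∈ AddSubgroup.closure (Set.range b) := by
  choose n hn using hx
  rw [← b.linearCombination_repr x]
  refine sum_mem fun i _ => ?_
  change b.repr x i • b i ∈ _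
  rw [hn, Int.cast_smul_eq_zsmul]
  exact zsmul_mem (AddSubgroup.subset_closure (Set.mem_range_self i)) _

theorem closure_range_single (d : ℕ) :
    AddSubgroup.closure (Set.range fun i : Fin d => Pi.single i (1 : ℝ)) = intLattice d := by
  refine le_antisymm ((AddSubgroup.closure_le _).2 ?_) fun x hx => ?_
  · rintro _ ⟨i, rfl⟩
    exact isLP_single i
  · simpa [funext fun i => Pi.basisFun_apply ℝ (Fin d) i] using
      mem_closure_range_of_repr_intCast (Pi.basisFun ℝ (Fin d)) (x := x) hx

theorem unimodular_of_image_closure_range {κ : Type*} {d : ℕ} {F : κ → Fin d → ℝ}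
    (hF : AddSubgroup.closure (Set.range F) = intLattice d) {σ : κ ≃ Fin d}
    {φ : (Fin d → ℝ) ≃ₗ[ℝ] (Fin d → ℝ)} (hφ : ∀ a, φ (F a) = Pi.single (σ a) 1) :
    Unimodular φ := by
  have hmap : (intLattice d).map φ.toAddEquiv.toAddMonoidHom = intLattice d := by
    rw [← hF, AddMonoidHom.map_closure, hF, ← closure_range_single, ← Set.range_comp,
      ← σ.surjective.range_comp]
    exact congrArg (fun f => AddSubgroup.closure (Set.range f)) (funext hφ)
  intro x
  change x ∈ intLattice d ↔ φ x ∈ intLattice d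
  conv_rhs => rw [← hmap]
  exact (AddSubgroup.mem_map_equiv.trans (by simp)).symm

theorem exists_unimodular_apply_eq_single {κ : Type*} {d : ℕ} {F : κ → Fin d → ℝ} (σ : κ ≃ Fin d)
    (hF : AddSubgroup.closure (Set.range F) = intLattice d) :
    ∃ φ : (Fin d → ℝ) ≃ₗ[ℝ] (Fin d → ℝ), Unimodular φ ∧ ∀ a, φ (F a) = Pi.single (σ a) 1 := by
  have : Fintype κ := Fintype.ofEquiv _ σ.symm
  have hle : AddSubgroup.closure (Set.range F) ≤ (Submodule.span ℝ (Set.range F)).toAddSubgroup :=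
    (AddSubgroup.closure_le _).2 Submodule.subset_span
  have hspan : ⊤ ≤ Submodule.span ℝ (Set.range F) := by
    rw [← (Pi.basisFun ℝ (Fin d)).span_eq, Submodule.span_le]
    rintro _ ⟨i, rfl⟩
    rw [Pi.basisFun_apply]
    exact hle (hF ▸ isLP_single i)
  let B := basisOfTopLeSpanOfCardEqFinrank F hspan (by simp [Fintype.card_congr σ])
  have hB (a : κ) : B.equiv (Pi.basisFun ℝ (Fin d)) σ (F a) = Pi.single (σ a) 1 := by
    rw [show F a = B a by simp [B], B.equiv_apply, Pi.basisFun_apply]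
  exact ⟨_, unimodular_of_image_closure_range hF hB, hB⟩

end Unimodular

section Pairs

theorem exists_transversal_of_involutive {ι : Type*} [LinearOrder ι] {s : ι → ι} {S : Finset ι}
    (hS : ∀ i ∈ S, s i ∈ S) (hss : ∀ i ∈ S, s (s i) = i) (hne : ∀ i ∈ S, s i ≠ i) :
    ∃ n, ∃ t : Fin n → ι, S.card = 2 * n ∧ ∀ i, i ∈ S ↔ ∃ j, i = t j ∨ i = s (t j) := by
  set T := S.filter fun i => i < s i
  have hTS {i : ι} (hi : i ∈ T) : i ∈ S := (Finset.mem_filter.1 hi).1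
  have hT {i : ι} (hi : i ∈ S) (h : ¬i < s i) : s i ∈ T :=
    Finset.mem_filter.2 ⟨hS i hi, by rw [hss i hi]; exact lt_of_le_of_ne (not_lt.1 h) (hne i hi)⟩
  have hcard : (S.filter fun i => ¬i < s i).card = T.card := by
    refine Finset.card_bij (fun i _ => s i)
      (fun i hi => hT (Finset.mem_filter.1 hi).1 (Finset.mem_filter.1 hi).2)
      (fun i hi j hj hij => ?_) fun i hi => ⟨s i, ?_, hss i (hTS hi)⟩
    · rw [← hss i (Finset.mem_filter.1 hi).1, hij, hss j (Finset.mem_filter.1 hj).1]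
    · refine Finset.mem_filter.2 ⟨hS i (hTS hi), ?_⟩
      rw [hss i (hTS hi)]
      exact (Finset.mem_filter.1 hi).2.not_gt
  refine ⟨T.card, fun j => T.equivFin.symm j, ?_, fun i => ⟨fun hi => ?_, ?_⟩⟩
  · rw [← Finset.card_filter_add_card_filter_not (s := S) fun i => i < s i, hcard, two_mul]
  · by_cases h : i < s i
    · exact ⟨T.equivFin ⟨i, Finset.mem_filter.2 ⟨hi, h⟩⟩, .inl (by simp)⟩
    · exact ⟨T.equivFin ⟨s i, hT hi h⟩, .inr (by simp [hss i hi])⟩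
  · rintro ⟨j, rfl | rfl⟩
    exacts [hTS (T.equivFin.symm j).2, hS _ (hTS (T.equivFin.symm j).2)]

theorem embed2_eq {d j : ℕ} (hj : j + 1 < d) (v : Fin 2 → ℤ) :
    embed2 d j v = (v 0 : ℝ) • Pi.single (⟨j, by omega⟩ : Fin d) (1 : ℝ) +
      (v 1 : ℝ) • Pi.single (⟨j + 1, hj⟩ : Fin d) (1 : ℝ) := by
  ext i
  simp only [embed2, Pi.add_apply, Pi.smul_apply, Pi.single_apply, Fin.ext_iff, smul_eq_mul,
    mul_ite, mul_one, mul_zero]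
  split_ifs <;> first | omega | simp

theorem embed3_eq {d : ℕ} (hd : 2 < d) (v : Fin 3 → ℤ) :
    embed3 d v = (v 0 : ℝ) • Pi.single (⟨0, by omega⟩ : Fin d) (1 : ℝ) +
      (v 1 : ℝ) • Pi.single (⟨1, by omega⟩ : Fin d) (1 : ℝ) +
      (v 2 : ℝ) • Pi.single (⟨2, hd⟩ : Fin d) (1 : ℝ) := by
  ext i
  simp only [embed3, Pi.add_apply, Pi.smul_apply, Pi.single_apply, Fin.ext_iff, smul_eq_mul,
    mul_ite, mul_one, mul_zero]
  split_ifs <;> first | omega | simp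

end Pairs

section Splitting

/-- The facet vertex `b i`, its neighbour `b (s i) - b i` and its antipode `-b i`. -/
def vertexTriple {ι E : Type*} [AddCommGroup E] [Module ℝ E] (b : Module.Basis ι ℝ E) (s : ι → ι)
    (i : ι) : Set E :=
  {b i, b (s i) - b i, -b i}

theorem vertexTriple_union {ι E : Type*} [AddCommGroup E] [Module ℝ E] (b : Module.Basis ι ℝ E)
    {s : ι → ι} {i : ι} (hi : s (s i) = i) :
    vertexTriple b s i ∪ vertexTriple b s (s i) =
      {b i, -b (s i), b i + -b (s i), -b i, - -b (s i), -b i - -b (s i)} := by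
  ext x
  simp only [vertexTriple, hi, Set.mem_union, Set.mem_insert_iff, Set.mem_singleton_iff, neg_neg,
    sub_neg_eq_add, ← sub_eq_add_neg, neg_add_eq_sub]
  tauto

variable {d : ℕ} {φ : (Fin d → ℝ) ≃ₗ[ℝ] (Fin d → ℝ)}

theorem image_hexagon_eq {j : ℕ} (hj : j + 1 < d) {f g : Fin d → ℝ}
    (hf : φ f = Pi.single ⟨j, by omega⟩ 1) (hg : φ g = Pi.single ⟨j + 1, hj⟩ 1) :
    φ '' {f, g, f + g, -f, -g, -f - g} = embed2 d j '' V2v := by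
  simp [V2v, Set.image_insert_eq, embed2_eq hj, hf, hg, sub_eq_add_neg]

theorem image_eq_image_embed2_tV2v (hd : 1 < d) {f g : Fin d → ℝ}
    (hf : φ f = Pi.single ⟨0, by omega⟩ 1) (hg : φ g = Pi.single ⟨1, hd⟩ 1) :
    φ '' {f, g, f + g, -f, -g} = embed2 d 0 '' tV2v := by
  simp [tV2v, Set.image_insert_eq, embed2_eq hd, hf, hg]

theorem image_eq_image_embed3_Q3'v (hd : 2 < d) {f g h : Fin d → ℝ}
    (hf : φ f = Pi.single ⟨0, by omega⟩ 1) (hg : φ g = Pi.single ⟨1, by omega⟩ 1)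
    (hh : φ h = Pi.single ⟨2, hd⟩ 1) :
    φ '' {f, -f, g, -g, f + g, -f - g, h, f - h} = embed3 d '' Q3'v := by
  simp [Q3'v, Set.image_insert_eq, embed3_eq hd, hf, hg, hh, sub_eq_add_neg]

/-- The coordinates of `Fin r ⊕ Fin n × Fin 2` in the standard models: first a core of rank `r`,
then `n` coordinate pairs. -/
def coreSumPairsEquiv {r n d : ℕ} (hd : r + n * 2 = d) : Fin r ⊕ Fin n × Fin 2 ≃ Fin d :=
  ((Equiv.refl _).sumCongr finProdFinEquiv).trans (finSumFinEquiv.trans (finCongr hd))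

theorem closure_range_core_sumElim {ι E κ : Type*} [AddCommGroup E] [Module ℝ E]
    {b : Module.Basis ι ℝ E} {s : ι → ι} {S : Finset ι} {h : κ → E}
    (hh : AddSubgroup.closure (Set.range h) = AddSubgroup.closure (b '' (S : Set ι)ᶜ))
    {n : ℕ} {t : Fin n → ι} (ht : ∀ i, i ∈ S ↔ ∃ j, i = t j ∨ i = s (t j)) :
    AddSubgroup.closure (Set.range
      (Sum.elim h fun p : Fin n × Fin 2 => ![b (t p.1), -b (s (t p.1))] p.2)) =
      AddSubgroup.closure (Set.range b) := by
  have hpairs : AddSubgroup.closure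
      (Set.range fun p : Fin n × Fin 2 => ![b (t p.1), -b (s (t p.1))] p.2) =
      AddSubgroup.closure (b '' (S : Set ι)) := by
    refine le_antisymm ((AddSubgroup.closure_le _).2 ?_) ((AddSubgroup.closure_le _).2 ?_)
    · rintro _ ⟨⟨j, k⟩, rfl⟩
      have hmem {i : ι} (hi : i = t j ∨ i = s (t j)) :
          b i ∈ AddSubgroup.closure (b '' (S : Set ι)) :=
        AddSubgroup.subset_closure (Set.mem_image_of_mem b ((ht i).2 ⟨j, hi⟩))
      fin_cases k
      exacts [hmem (.inl rfl), neg_mem (hmem (.inr rfl))]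
    · rintro _ ⟨i, hi, rfl⟩
      obtain ⟨j, rfl | rfl⟩ := (ht i).1 hi
      · exact AddSubgroup.subset_closure ⟨(j, 0), rfl⟩
      · exact neg_mem_iff.1 (AddSubgroup.subset_closure ⟨(j, 1), rfl⟩)
  rw [Set.Sum.elim_range, AddSubgroup.closure_union, hh, hpairs, ← AddSubgroup.closure_union,
    ← Set.image_union, Set.compl_union_self, Set.image_univ]

theorem exists_unimodular_image_vertexTriple {r : ℕ} {b : Module.Basis (Fin d) ℝ (Fin d → ℝ)}
    (hb : AddSubgroup.closure (Set.range b) = intLattice d) {s : Fin d → Fin d}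
    {S : Finset (Fin d)} (hS : ∀ i ∈ S, s i ∈ S) (hss : ∀ i ∈ S, s (s i) = i)
    (hne : ∀ i ∈ S, s i ≠ i) (hr : Sᶜ.card = r) {h : Fin r → Fin d → ℝ}
    (hh : AddSubgroup.closure (Set.range h) = AddSubgroup.closure (b '' (S : Set (Fin d))ᶜ)) :
    ∃ n, d = 2 * n + r ∧ ∃ φ : (Fin d → ℝ) ≃ₗ[ℝ] (Fin d → ℝ), Unimodular φ ∧
      (∀ a (ha : a.1 < d), φ (h a) = Pi.single ⟨a, ha⟩ 1) ∧
      φ '' (⋃ i ∈ S, vertexTriple b s i) = ⋃ j ∈ Finset.range n, embed2 d (2 * j + r) '' V2v := by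
  obtain ⟨n, t, hn, ht⟩ := exists_transversal_of_involutive hS hss hne
  have hd : r + n * 2 = d := by
    have := S.card_compl_add_card
    rw [Fintype.card_fin] at this
    omega
  obtain ⟨φ, hφ, hφF⟩ := exists_unimodular_apply_eq_single (coreSumPairsEquiv hd)
    ((closure_range_core_sumElim hh ht).trans hb)
  have hval (j : Fin n) (k : Fin 2) :
      (coreSumPairsEquiv hd (.inr (j, k)) : ℕ) = 2 * j + r + k := by
    simp only [coreSumPairsEquiv, Equiv.trans_apply, Equiv.sumCongr_apply, Sum.map_inr,
      finSumFinEquiv_apply_right, finCongr_apply, Fin.val_cast, Fin.val_natAdd,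
      finProdFinEquiv_apply_val]
    omega
  have hpair (j : Fin n) : φ '' (vertexTriple b s (t j) ∪ vertexTriple b s (s (t j))) =
      embed2 d (2 * j + r) '' V2v := by
    rw [vertexTriple_union b (hss _ ((ht _).2 ⟨j, .inl rfl⟩))]
    refine image_hexagon_eq (by omega) ?_ ?_
    · exact (hφF (.inr (j, 0))).trans (congrArg (Pi.single · 1) (Fin.ext (hval j 0)))
    · exact (hφF (.inr (j, 1))).trans (congrArg (Pi.single · 1) (Fin.ext (hval j 1)))
  have hunion : ⋃ i ∈ S, vertexTriple b s i =
      ⋃ j, (vertexTriple b s (t j) ∪ vertexTriple b s (s (t j))) := by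
    ext x
    simp only [Set.mem_iUnion, ht, Set.mem_union, exists_prop]
    constructor
    · rintro ⟨_, ⟨j, rfl | rfl⟩, hx⟩
      exacts [⟨j, .inl hx⟩, ⟨j, .inr hx⟩]
    · rintro ⟨j, hx | hx⟩
      exacts [⟨_, ⟨j, .inl rfl⟩, hx⟩, ⟨_, ⟨j, .inr rfl⟩, hx⟩]
  refine ⟨n, by omega, φ, hφ, fun a _ => hφF (.inl a), ?_⟩
  rw [hunion, Set.image_iUnion, Set.iUnion_congr hpair]
  ext x
  simp [Fin.exists_iff]

end Splitting

section Models

variable {d : ℕ} {b : Module.Basis (Fin d) ℝ (Fin d → ℝ)} {s : Fin d → Fin d} {o r : Fin d}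

theorem closure_pair_sub {A : Type*} [AddGroup A] (x y : A) :
    AddSubgroup.closure {x, y - x} = AddSubgroup.closure {y, x} := by
  have hx (z : A) : x ∈ AddSubgroup.closure {z, x} := AddSubgroup.subset_closure (by simp)
  refine le_antisymm ((AddSubgroup.closure_le _).2 ?_) ((AddSubgroup.closure_le _).2 ?_)
  · rintro _ (rfl | rfl)
    exacts [hx y, sub_mem (AddSubgroup.subset_closure (by simp)) (hx y)]
  · rw [Set.pair_comm x]
    rintro _ (rfl | rfl)
    exacts [by simpa using add_mem (AddSubgroup.subset_closure (Set.mem_insert _ _)) (hx (_ - x)),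
      hx _]

theorem closure_range_pair_sub {ι A : Type*} [AddGroup A] (b : ι → A) (i k : ι) :
    AddSubgroup.closure (Set.range ![b k, b i - b k]) = AddSubgroup.closure (b '' {k, i}) := by
  rw [Set.image_pair, Set.pair_comm (b k), ← closure_pair_sub, Matrix.range_cons_cons_empty]

theorem closure_range_triple_sub {ι A : Type*} [AddGroup A] (b : ι → A) (i k r : ι) :
    AddSubgroup.closure (Set.range ![b i, b k - b i, b r]) =
      AddSubgroup.closure (b '' {k, i, r}) := by
  have hunion : ({k, i, r} : Set ι) = {r} ∪ {k, i} := by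
    ext
    simp only [Set.mem_insert_iff, Set.mem_singleton_iff, Set.mem_union]
    tauto
  rw [hunion, Set.image_union, AddSubgroup.closure_union, Set.image_pair, ← closure_pair_sub,
    ← AddSubgroup.closure_union, Set.image_singleton, Matrix.range_cons,
    Matrix.range_cons_cons_empty, Set.singleton_union, Set.singleton_union, Set.insert_comm (b r),
    Set.pair_comm (b r)]

theorem exists_unimodular_image_of_involutive
    (hb : AddSubgroup.closure (Set.range b) = intLattice d) (hs : Function.Involutive s)
    (hne : ∀ i, s i ≠ i) (o : Fin d) :
    Even d ∧ ∃ φ : (Fin d → ℝ) ≃ₗ[ℝ] (Fin d → ℝ), Unimodular φ ∧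
      φ '' ({b o, b (s o) - b o} ∪ ⋃ i ∈ ({o}ᶜ : Finset (Fin d)), vertexTriple b s i) =
        embed2 d 0 '' tV2v ∪
          ⋃ j ∈ Finset.range ((d - 2) / 2), embed2 d (2 * j + 2) '' V2v := by
  have hSs (i : Fin d) (hi : i ∈ ({s o, o}ᶜ : Finset (Fin d))) : s i ∈ ({s o, o}ᶜ : Finset _) := by
    simp only [Finset.mem_compl, Finset.mem_insert, Finset.mem_singleton, hs.injective.eq_iff,
      not_or] at hi ⊢
    exact ⟨hi.2, fun h => hi.1 (by rw [← h, hs i])⟩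
  obtain ⟨n, hn, φ, hφ, hcore, hpairs⟩ := exists_unimodular_image_vertexTriple (r := 2) hb hSs
    (fun i _ => hs i) (fun i _ => hne i)
    (by rw [compl_compl, Finset.card_pair (hne o)]) (h := ![b (s o), b o - b (s o)])
    (by simpa only [Finset.coe_compl, compl_compl, Finset.coe_insert, Finset.coe_singleton] using
      closure_range_pair_sub b o (s o))
  have hV : {b o, b (s o) - b o} ∪ ⋃ i ∈ ({o}ᶜ : Finset (Fin d)), vertexTriple b s i =
      {b (s o), b o - b (s o), b (s o) + (b o - b (s o)), -b (s o), -(b o - b (s o))} ∪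
        ⋃ i ∈ ({s o, o}ᶜ : Finset (Fin d)), vertexTriple b s i := by
    rw [← Finset.insert_compl_insert (Finset.notMem_singleton.2 (hne o)),
      Finset.set_biUnion_insert, ← Set.union_assoc]
    congr 1
    ext x
    simp only [vertexTriple, hs o, Set.mem_union, Set.mem_insert_iff, Set.mem_singleton_iff,
      neg_sub, add_sub_cancel]
    tauto
  refine ⟨⟨n + 1, by omega⟩, φ, hφ, ?_⟩
  rw [hV, Set.image_union, hpairs,
    image_eq_image_embed2_tV2v (f := b (s o)) (g := b o - b (s o)) (by omega) (hcore 0 _)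
      (hcore 1 _),
    show (d - 2) / 2 = n by omega]

theorem exists_unimodular_image_of_apply_eq
    (hb : AddSubgroup.closure (Set.range b) = intLattice d) (hro : r ≠ o) (hsr : s r = o)
    (hr : ∀ i, s i ≠ r) (hs : ∀ i ≠ r, s (s i) = i) (hne : ∀ i, s i ≠ i) :
    Odd d ∧ ∃ φ : (Fin d → ℝ) ≃ₗ[ℝ] (Fin d → ℝ), Unimodular φ ∧
      φ '' ({b r, b (s r) - b r} ∪ ⋃ i ∈ ({r}ᶜ : Finset (Fin d)), vertexTriple b s i) =
        embed3 d '' Q3'v ∪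
          ⋃ j ∈ Finset.range ((d - 3) / 2), embed2 d (2 * j + 3) '' V2v := by
  have hmem (i : Fin d) : i ∈ ({s o, o, r}ᶜ : Finset (Fin d)) ↔ i ≠ s o ∧ i ≠ o ∧ i ≠ r := by
    simp
  have hSs (i : Fin d) (hi : i ∈ ({s o, o, r}ᶜ : Finset (Fin d))) :
      s i ∈ ({s o, o, r}ᶜ : Finset _) := by
    rw [hmem] at hi ⊢
    exact ⟨fun h => hi.2.1 (by rw [← hs i hi.2.2, h, hs o hro.symm]),
      fun h => hi.1 (by rw [← h, hs i hi.2.2]), hr i⟩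
  obtain ⟨n, hn, φ, hφ, hcore, hpairs⟩ := exists_unimodular_image_vertexTriple (r := 3) hb hSs
    (fun i hi => hs i ((hmem i).1 hi).2.2) (fun i _ => hne i)
    (by rw [compl_compl, Finset.card_eq_three.2 ⟨_, _, _, hne o, hr o, hro.symm, rfl⟩])
    (h := ![b o, b (s o) - b o, b r])
    (by simpa only [Finset.coe_compl, compl_compl, Finset.coe_insert, Finset.coe_singleton] using
      closure_range_triple_sub b o (s o) r)
  have hV : {b r, b (s r) - b r} ∪ ⋃ i ∈ ({r}ᶜ : Finset (Fin d)), vertexTriple b s i =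
      {b o, -b o, b (s o) - b o, -(b (s o) - b o), b o + (b (s o) - b o),
        -b o - (b (s o) - b o), b r, b o - b r} ∪
        ⋃ i ∈ ({s o, o, r}ᶜ : Finset (Fin d)), vertexTriple b s i := by
    rw [← Finset.insert_compl_insert (Finset.notMem_singleton.2 hro.symm),
      ← Finset.insert_compl_insert (a := s o) (by simp [hne, hr]),
      Finset.set_biUnion_insert, Finset.set_biUnion_insert, ← Set.union_assoc, ← Set.union_assoc]
    congr 1
    ext x
    simp only [vertexTriple, hs o hro.symm, hsr, Set.mem_union, Set.mem_insert_iff,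
      Set.mem_singleton_iff, neg_sub, add_sub_cancel, sub_sub_eq_add_sub, neg_add_cancel, zero_sub]
    tauto
  refine ⟨⟨n + 1, by omega⟩, φ, hφ, ?_⟩
  rw [hV, Set.image_union, hpairs,
    image_eq_image_embed3_Q3'v (f := b o) (g := b (s o) - b o) (h := b r) (by omega) (hcore 0 _)
      (hcore 1 _) (hcore 2 _),
    show (d - 3) / 2 = n by omega]

end Models

section Conclusion

theorem IsMinimalFacetBasis.coe_eq_union_vertexTriple {ι E : Type*} [Fintype ι] [DecidableEq ι]
    [AddCommGroup E] [Module ℝ E] {L : AddSubgroup E} {V : Finset E} {b : Module.Basis ι ℝ E}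
    {o m : ι} {s : ι → ι} (H : IsSimplicialReflexive ι L V)
    (hcard : 3 * Fintype.card ι ≤ V.card + 1) (hb : IsMinimalFacetBasis V b o)
    (hs : IsNeighborMap V b s) (hm : ∀ k, k ∈ ({m}ᶜ : Finset ι) ↔ -b k ∈ V) :
    (V : Set E) = {b m, b (s m) - b m} ∪ ⋃ i ∈ ({m}ᶜ : Finset ι), vertexTriple b s i := by
  ext v
  simp only [Finset.mem_coe, hb.mem_iff H hcard hs hm, Set.mem_union, Set.mem_insert_iff,
    Set.mem_singleton_iff, Set.mem_iUnion, vertexTriple, Finset.mem_compl, Finset.mem_singleton,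
    exists_prop]
  constructor
  · rintro (⟨i, rfl⟩ | ⟨i, rfl⟩ | ⟨k, hk, rfl⟩)
    · rcases eq_or_ne i m with rfl | hi
      exacts [.inl (.inl rfl), .inr ⟨i, hi, .inl rfl⟩]
    · rcases eq_or_ne i m with rfl | hi
      exacts [.inl (.inr rfl), .inr ⟨i, hi, .inr (.inl rfl)⟩]
    · exact .inr ⟨k, hk, .inr (.inr rfl)⟩
  · rintro ((rfl | rfl) | ⟨i, hi, rfl | rfl | rfl⟩)
    exacts [.inl ⟨m, rfl⟩, .inr (.inl ⟨m, rfl⟩), .inl ⟨i, rfl⟩, .inr (.inl ⟨i, rfl⟩),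
      .inr (.inr ⟨i, hi, rfl⟩)]

theorem IsMinimalFacetBasis.closure_range_eq {ι E : Type*} [Fintype ι] [DecidableEq ι]
    [AddCommGroup E] [Module ℝ E] {L : AddSubgroup E} {V : Finset E} {b : Module.Basis ι ℝ E}
    {o : ι} (H : IsSimplicialReflexive ι L V) (hcard : 3 * Fintype.card ι ≤ V.card + 1)
    (hb : IsMinimalFacetBasis V b o) : AddSubgroup.closure (Set.range b) = L := by
  refine le_antisymm ((AddSubgroup.closure_le _).2 ?_) fun x hx =>
    mem_closure_range_of_repr_intCast b fun i => hb.exists_repr_eq_intCast H hcard i hx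
  rintro _ ⟨i, rfl⟩
  exact H.mem_lattice _ (hb.isFacetBasis.mem i)

theorem IsSimplicialReflexive.exists_unimodular_image_eq_splitModel {d : ℕ}
    {V : Finset (Fin d → ℝ)} (H : IsSimplicialReflexive (Fin d) (intLattice d) V)
    (hcard : 3 * d ≤ V.card + 1) {b₀ : Module.Basis (Fin d) ℝ (Fin d → ℝ)} {o : Fin d}
    (hb₀ : IsFacetBasis V b₀) (ho : b₀ o = ∑ v ∈ V, v) :
    (Even d ∧ ∃ φ : (Fin d → ℝ) ≃ₗ[ℝ] (Fin d → ℝ), Unimodular φ ∧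
        φ '' convexHull ℝ V = splitModel2 d tV2v) ∨
      (Odd d ∧ ∃ φ : (Fin d → ℝ) ≃ₗ[ℝ] (Fin d → ℝ), Unimodular φ ∧
        φ '' convexHull ℝ V = splitModel3 d Q3'v) := by
  classical
  replace hcard : 3 * Fintype.card (Fin d) ≤ V.card + 1 := by rwa [Fintype.card_fin]
  obtain ⟨b, hb⟩ := exists_isMinimalFacetBasis hb₀ ho
  obtain ⟨s, hs⟩ := hb.exists_isNeighborMap H hcard
  have hclosure := hb.closure_range_eq H hcard
  have hK (k : Fin d) : k ∈ Finset.univ.filter (fun k => -b k ∈ V) ↔ -b k ∈ V := by simp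
  have hinv (k : Fin d) (hk : k ∈ Finset.univ.filter fun k => -b k ∈ V) (hko : k ≠ o) :
      s (s k) = k := by
    obtain ⟨j, hj, hjs⟩ := hb.exists_eq_neg H hcard hs ((hK k).1 hk) (by simp)
    obtain rfl : k = j := b.injective (neg_injective hj)
    exact hjs hko
  rcases involutive_or_exists_of_card_fibre hs.apply_ne (hb.card_fibre_eq H hcard hs hK) hinv with
    ⟨hKo, hss⟩ | ⟨r, hro, hKr, hsr, hr, hss⟩
  · obtain ⟨hd, φ, hφ, himage⟩ :=
      exists_unimodular_image_of_involutive hclosure hss hs.apply_ne o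
    rw [← hb.coe_eq_union_vertexTriple H hcard hs (hKo ▸ hK)] at himage
    exact .inl ⟨hd, φ, hφ, (φ.toLinearMap.image_convexHull _).trans (congrArg _ himage)⟩
  · obtain ⟨hd, φ, hφ, himage⟩ :=
      exists_unimodular_image_of_apply_eq hclosure hro hsr hr hss hs.apply_ne
    rw [← hb.coe_eq_union_vertexTriple H hcard hs (hKr ▸ hK)] at himage
    exact .inr ⟨hd, φ, hφ, (φ.toLinearMap.image_convexHull _).trans (congrArg _ himage)⟩

end Conclusion

section PolarDual

variable {E : Type*} [AddCommGroup E] [Module ℝ E]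

/-- The functionals that are at most `1` on `S`. For a set `S` in `ℝ^d` these are the points of
`dualPolytope S`, read as functionals through `dotProductEquiv`. -/
def polarDual (S : Set E) : Set (Module.Dual ℝ E) := {u | ∀ v ∈ S, u v ≤ 1}

theorem polarDual_convexHull (S : Set E) : polarDual (convexHull ℝ S) = polarDual S :=
  Set.Subset.antisymm (fun _ hu v hv => hu v (subset_convexHull ℝ S hv))
    fun u hu => convexHull_min hu (convex_halfSpace_le u.isLinear 1)

theorem isExtreme_setOf_apply_eq (u : Module.Dual ℝ E) {S : Set E} {r : ℝ}
    (hu : ∀ y ∈ S, u y ≤ r) : IsExtreme ℝ S {y ∈ S | u y = r} := by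
  refine ⟨Set.sep_subset _ _, ?_⟩
  rintro x hx y hy _ ⟨_, hz⟩ ⟨s, t, hs, ht, hst, rfl⟩
  simp only [map_add, map_smul, smul_eq_mul] at hz
  obtain rfl : s = 1 - t := by linarith
  refine ⟨hx, (hu x hx).antisymm (le_of_mul_le_mul_left ?_ hs)⟩
  linarith [mul_le_mul_of_nonneg_left (hu y hy) ht.le]

theorem mem_extremePoints_polarDual_of_span_eq_top {S : Set E} {u : Module.Dual ℝ E}
    (hu : u ∈ polarDual S) (hspan : Submodule.span ℝ {v ∈ S | u v = 1} = ⊤) :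
    u ∈ (polarDual S).extremePoints ℝ :=
  mem_extremePoints_iff_left.2 ⟨hu, fun _ hf _ hg hfg => LinearMap.ext_on hspan fun v hv =>
    ((isExtreme_setOf_apply_eq (S := polarDual S) (Module.Dual.eval ℝ E v) fun _ h => h v hv.1
      ).left_mem_of_mem_openSegment hf hg ⟨hu, hv.2⟩ hfg).2.trans hv.2.symm⟩

theorem span_eq_top_of_mem_extremePoints_polarDual {V : Finset E} {u : Module.Dual ℝ E}
    (hu : u ∈ (polarDual (V : Set E)).extremePoints ℝ) :
    Submodule.span ℝ {v ∈ (V : Set E) | u v = 1} = ⊤ := by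
  by_contra hne
  obtain ⟨f, hf0, hf⟩ := Submodule.exists_le_ker_of_lt_top _ (lt_top_iff_ne_top.2 hne)
  have hmem {g : Module.Dual ℝ E} (hg : ∀ v ∈ V, u v = 1 → g v = 0) :
      ∀ᶠ t : ℝ in nhdsWithin 0 (Set.Ioi 0), u + t • g ∈ polarDual (V : Set E) := by
    refine (Filter.eventually_all_finset V).2 fun v hv => ?_
    rcases (hu.1 v hv).eq_or_lt with h | h
    · simp [hg v hv h, h]
    · have hcont : Continuous fun t : ℝ => (u + t • g) v := by
        simp only [LinearMap.add_apply, LinearMap.smul_apply]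
        fun_prop
      have hlt : ∀ᶠ t : ℝ in nhds 0, (u + t • g) v < 1 :=
        hcont.continuousAt.eventually_lt continuousAt_const (by simpa using h)
      exact (hlt.filter_mono nhdsWithin_le_nhds).mono fun t ht => ht.le
  have hfV : ∀ v ∈ V, u v = 1 → f v = 0 := fun v hv h => hf (Submodule.subset_span ⟨hv, h⟩)
  obtain ⟨t, ⟨hadd, hsub⟩, ht⟩ := (((hmem hfV).and
    (hmem (g := -f) fun v hv h => by simp [hfV v hv h])).and self_mem_nhdsWithin).exists
  have hmid : u ∈ openSegment ℝ (u + t • f) (u + t • -f) :=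
    ⟨1 / 2, 1 / 2, by norm_num, by norm_num, by norm_num, by module⟩
  exact hf0 ((smul_eq_zero.1 (add_eq_left.1 (hu.2 hadd hsub hmid))).resolve_left ht.ne')

theorem IsFacetBasis.mem_extremePoints_polarDual {ι : Type*} {V : Finset E}
    {b : Module.Basis ι ℝ E} (hb : IsFacetBasis V b) :
    b.sumCoords ∈ (polarDual (V : Set E)).extremePoints ℝ := by
  refine mem_extremePoints_polarDual_of_span_eq_top hb.sumCoords_le (top_le_iff.1 ?_)
  rw [← b.span_eq]
  refine Submodule.span_mono ?_
  rintro _ ⟨i, rfl⟩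
  exact ⟨hb.mem i, b.sumCoords_self_apply i⟩

theorem exists_isFacetBasis_of_mem_extremePoints_polarDual {ι : Type*}
    (e : Module.Basis ι ℝ E) {V : Finset E} {u : Module.Dual ℝ E}
    (hu : u ∈ (polarDual (V : Set E)).extremePoints ℝ) {w : E} (hw : w ∈ V) (huw : u w = 1) :
    ∃ (b : Module.Basis ι ℝ E) (o : ι), IsFacetBasis V b ∧ b o = w := by
  have hw0 : w ≠ 0 := by
    rintro rfl
    simp at huw
  have hli : LinearIndepOn ℝ id {w} := .singleton hw0
  have hsub : {w} ⊆ {v ∈ (V : Set E) | u v = 1} := Set.singleton_subset_iff.2 ⟨hw, huw⟩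
  have hspan := (span_eq_top_of_mem_extremePoints_polarDual hu).ge
  let c := Module.Basis.extendLe hli hsub hspan
  let b := c.reindex (c.indexEquiv e)
  have hb (i : ι) : b i ∈ V ∧ u (b i) = 1 :=
    Module.Basis.extendLe_subset hli hsub hspan (c.range_reindex (c.indexEquiv e) ▸ ⟨i, rfl⟩)
  have hsum : b.sumCoords = u := b.ext fun i => by rw [b.sumCoords_self_apply, (hb i).2]
  obtain ⟨o, ho⟩ : w ∈ Set.range b := by
    rw [c.range_reindex]
    exact Module.Basis.subset_extendLe hli hsub hspan rfl
  exact ⟨b, o, ⟨fun i => (hb i).1, hsum ▸ hu.1⟩, ho⟩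

theorem vectorSpan_setOf_sumCoords_eq_one {ι : Type*} [Finite ι] (b : Module.Basis ι ℝ E)
    {S : Set E} (hb : ∀ i, b i ∈ S) :
    vectorSpan ℝ {y ∈ S | b.sumCoords y = 1} = LinearMap.ker b.sumCoords := by
  have := Fintype.ofFinite ι
  refine le_antisymm (Submodule.span_le.2 ?_) fun x hx => ?_
  · rintro _ ⟨y, hy, z, hz, rfl⟩
    exact (map_sub b.sumCoords y z).trans (by rw [hy.2, hz.2, sub_self])
  · rcases isEmpty_or_nonempty ι with h | ⟨⟨j⟩⟩
    · rw [← b.sum_repr x, Finset.univ_eq_empty, Finset.sum_empty]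
      exact zero_mem _
    have hx0 : ∑ i, b.repr x i = 0 := by rw [← sumCoords_eq_sum_repr, LinearMap.mem_ker.1 hx]
    have hsum : x = ∑ i, b.repr x i • (b i - b j) := by
      simp only [smul_sub, Finset.sum_sub_distrib, b.sum_repr, ← Finset.sum_smul, hx0, zero_smul,
        sub_zero]
    rw [hsum]
    exact sum_mem fun i _ => Submodule.smul_mem _ _ <| vsub_mem_vectorSpan ℝ
      ⟨hb i, b.sumCoords_self_apply i⟩ ⟨hb j, b.sumCoords_self_apply j⟩

end PolarDual

section Interior

variable {E : Type*} [NormedAddCommGroup E] [NormedSpace ℝ E]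

theorem exists_mem_apply_neg_of_zero_mem_interior_convexHull [FiniteDimensional ℝ E] {S : Set E}
    (h0 : 0 ∈ interior (convexHull ℝ S)) {u : Module.Dual ℝ E} (hu : u ≠ 0) :
    ∃ v ∈ S, u v < 0 := by
  by_contra! hnonneg
  have hmin : IsLocalMin u.toContinuousLinearMap 0 := by
    filter_upwards [mem_interior_iff_mem_nhds.1 h0] with y hy
    rw [map_zero]
    exact convexHull_min hnonneg (convex_halfSpace_ge u.isLinear 0) hy
  have hzero := hmin.hasFDerivAt_eq_zero u.toContinuousLinearMap.hasFDerivAt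
  exact hu (LinearMap.ext fun x => DFunLike.congr_fun hzero x)

theorem exists_mem_polarDual_apply_eq_one {P : Set E} (hP : Convex ℝ P) (h0 : 0 ∈ interior P)
    {w : E} (hw : w ∉ interior P) : ∃ u ∈ polarDual P, u w = 1 := by
  obtain ⟨f, hf⟩ := geometric_hahn_banach_open_point hP.interior isOpen_interior hw
  have hfw : 0 < f w := by simpa using hf 0 h0
  have hle : closure (interior P) ⊆ {y | f y ≤ f w} :=
    closure_minimal (fun y hy => (hf y hy).le) (isClosed_le f.continuous continuous_const)
  rw [hP.closure_interior_eq_closure_of_nonempty_interior ⟨0, h0⟩] at hle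
  refine ⟨(f w)⁻¹ • f.toLinearMap, fun y hy => ?_, inv_mul_cancel₀ hfw.ne'⟩
  exact (inv_mul_le_iff₀ hfw).2 ((hle (subset_closure hy)).trans_eq (mul_one _).symm)

end Interior

section Polytope

variable {d : ℕ} {P : Set (Fin d → ℝ)} {V : Finset (Fin d → ℝ)}

theorem image_dualPolytope (P : Set (Fin d → ℝ)) :
    dotProductEquiv ℝ (Fin d) '' dualPolytope P = polarDual P :=
  Set.image_preimage_eq (polarDual P) (dotProductEquiv ℝ (Fin d)).surjective

theorem IsLatticePolytope.isCompact (hP : IsLatticePolytope P) : IsCompact P := by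
  obtain ⟨T, -, rfl⟩ := hP
  exact T.finite_toSet.isCompact_convexHull (𝕜 := ℝ)

theorem IsLatticePolytope.convex (hP : IsLatticePolytope P) : Convex ℝ P := by
  obtain ⟨T, -, rfl⟩ := hP
  exact convex_convexHull ℝ _

theorem IsLatticePolytope.isLP_of_mem_extremePoints (hP : IsLatticePolytope P) {x : Fin d → ℝ}
    (hx : x ∈ P.extremePoints ℝ) : IsLP x := by
  obtain ⟨T, hT, rfl⟩ := hP
  exact hT x (extremePoints_convexHull_subset hx)

theorem IsLatticePolytope.convexHull_eq (hP : IsLatticePolytope P)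
    (hV : (V : Set (Fin d → ℝ)) = P.extremePoints ℝ) : convexHull ℝ (V : Set (Fin d → ℝ)) = P := by
  rw [← (V.finite_toSet.isClosed_convexHull (𝕜 := ℝ)).closure_eq, hV,
    closure_convexHull_extremePoints hP.isCompact hP.convex]

theorem exists_dotp_eq_intCast {a x : Fin d → ℝ} (ha : IsLP a) (hx : IsLP x) :
    ∃ n : ℤ, dotp a x = n := by
  choose f hf using ha
  choose g hg using hx
  exact ⟨∑ i, f i * g i, by simp [dotp, hf, hg]⟩

theorem IsReflexive.exists_apply_eq_intCast (hP : IsReflexive P) {u : Module.Dual ℝ (Fin d → ℝ)}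
    (hu : u ∈ (polarDual P).extremePoints ℝ) {x : Fin d → ℝ} (hx : IsLP x) :
    ∃ n : ℤ, u x = n := by
  rw [← image_dualPolytope, ← image_extremePoints] at hu
  obtain ⟨a, ha, rfl⟩ := hu
  exact exists_dotp_eq_intCast (hP.2.2.isLP_of_mem_extremePoints ha) hx

theorem IsReflexive.exists_mem_extremePoints_polarDual (hP : IsReflexive P) {w : Fin d → ℝ}
    (hwP : w ∈ P) (hw : w ∉ interior P) :
    ∃ u ∈ (polarDual P).extremePoints ℝ, u w = 1 := by
  let ℓ : Module.Dual ℝ (Fin d → ℝ) := dotProductEquiv ℝ (Fin d) w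
  have hℓ (x : Fin d → ℝ) : ℓ x = dotp x w := dotProduct_comm w x
  have hface : IsExtreme ℝ (dualPolytope P) {x ∈ dualPolytope P | ℓ x = 1} :=
    isExtreme_setOf_apply_eq ℓ fun x hx => (hℓ x).trans_le (hx w hwP)
  have hcompact : IsCompact {x ∈ dualPolytope P | ℓ x = 1} := hP.2.2.isCompact.inter_right
    (isClosed_eq ℓ.continuous_of_finiteDimensional continuous_const)
  have hne : {x ∈ dualPolytope P | ℓ x = 1}.Nonempty := by
    obtain ⟨u, hu, huw⟩ := exists_mem_polarDual_apply_eq_one hP.1.convex hP.2.1 hw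
    rw [← image_dualPolytope] at hu
    obtain ⟨a, ha, rfl⟩ := hu
    exact ⟨a, ha, (hℓ a).trans huw⟩
  obtain ⟨a, ha⟩ := hcompact.extremePoints_nonempty hne
  refine ⟨dotProductEquiv ℝ (Fin d) a, ?_, (hℓ a).symm.trans ha.1.2⟩
  rw [← image_dualPolytope, ← image_extremePoints]
  exact Set.mem_image_of_mem _ (hface.extremePoints_subset_extremePoints ha)

theorem IsFacetBasis.isFacet (hd : 0 < d) {b : Module.Basis (Fin d) ℝ (Fin d → ℝ)}
    (hb : IsFacetBasis V b) :
    IsFacet (convexHull ℝ (V : Set (Fin d → ℝ))) {y ∈ convexHull ℝ (V : Set (Fin d → ℝ)) |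
      b.sumCoords y = 1} := by
  obtain ⟨a, ha⟩ := (dotProductEquiv ℝ (Fin d)).surjective b.sumCoords
  have hdotp (y : Fin d → ℝ) : dotp a y = b.sumCoords y := LinearMap.congr_fun ha y
  have hmem (i : Fin d) : b i ∈ convexHull ℝ (V : Set (Fin d → ℝ)) :=
    subset_convexHull ℝ _ (hb.mem i)
  refine ⟨a, ⟨b ⟨0, hd⟩, hmem _, b.sumCoords_self_apply _⟩, fun y hy => ?_,
    by simp only [hdotp], ?_⟩
  · rw [hdotp]
    exact (polarDual_convexHull (V : Set (Fin d → ℝ))).ge hb.sumCoords_le y hy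
  · have hne : b.sumCoords ≠ 0 := fun h => by
      simpa [-Module.Basis.coe_sumCoords, h] using b.sumCoords_self_apply ⟨0, hd⟩
    have hker := Module.Dual.finrank_ker_add_one_of_ne_zero hne
    rw [Module.finrank_fin_fun] at hker
    rw [vectorSpan_setOf_sumCoords_eq_one b hmem]
    exact Nat.eq_sub_of_add_eq hker

theorem IsSimplicial.mem_range_of_isFacetBasis (hs : IsSimplicial P) (hd : 0 < d)
    (hV : (V : Set (Fin d → ℝ)) = P.extremePoints ℝ) (hVP : convexHull ℝ (V : Set (Fin d → ℝ)) = P)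
    {b : Module.Basis (Fin d) ℝ (Fin d → ℝ)} (hb : IsFacetBasis V b) {v : Fin d → ℝ} (hv : v ∈ V)
    (hbv : b.sumCoords v = 1) : v ∈ Set.range b := by
  have hfacet := hs _ (hVP ▸ hb.isFacet hd)
  have hle : ∀ y ∈ P, b.sumCoords y ≤ 1 := by
    rw [← hVP]
    exact (polarDual_convexHull (V : Set (Fin d → ℝ))).ge hb.sumCoords_le
  have hVmem (x : Fin d → ℝ) (hx : x ∈ V) : x ∈ P := hVP ▸ subset_convexHull ℝ _ hx
  rw [(isExtreme_setOf_apply_eq b.sumCoords hle).extremePoints_eq, ← hV] at hfacet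
  have hsub : Set.range b ⊆ {y ∈ P | b.sumCoords y = 1} ∩ V := by
    rintro _ ⟨i, rfl⟩
    exact ⟨⟨hVmem _ (hb.mem i), b.sumCoords_self_apply i⟩, hb.mem i⟩
  have hrange : (Set.range b).ncard = d := by
    rw [← Set.image_univ, Set.ncard_image_of_injective _ b.injective, Set.ncard_univ,
      Nat.card_eq_fintype_card, Fintype.card_fin]
  rw [Set.eq_of_subset_of_ncard_le hsub (hfacet.trans hrange.symm).le
    (V.finite_toSet.inter_of_right _)]
  exact ⟨⟨hVmem v hv, hbv⟩, hv⟩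

theorem notMem_interior_of_mem_extremePoints (hd : 0 < d) {x : Fin d → ℝ}
    (hx : x ∈ P.extremePoints ℝ) : x ∉ interior P := by
  have : Nonempty (Fin d) := ⟨⟨0, hd⟩⟩
  exact fun h => (disjoint_interior_extremePoints P).le_bot ⟨h, hx⟩

theorem IsReflexive.isSimplicialReflexive (hP : IsReflexive P) (hs : IsSimplicial P) (hd : 0 < d)
    (hV : (V : Set (Fin d → ℝ)) = P.extremePoints ℝ) :
    IsSimplicialReflexive (Fin d) (intLattice d) V where
  mem_lattice v hv := hP.1.isLP_of_mem_extremePoints (hV.le hv)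
  zero_notMem h := notMem_interior_of_mem_extremePoints hd (hV.le h) hP.2.1
  exists_neg _ hu := exists_mem_apply_neg_of_zero_mem_interior_convexHull
    ((hP.1.convexHull_eq hV).symm ▸ hP.2.1) hu
  mem_range _ hb _ hv hbv := hs.mem_range_of_isFacetBasis hd hV (hP.1.convexHull_eq hV) hb hv hbv
  integral b hb x hx := hP.exists_apply_eq_intCast
    (by rw [← hP.1.convexHull_eq hV, polarDual_convexHull]; exact hb.mem_extremePoints_polarDual) hx

theorem IsReflexive.exists_isFacetBasis_apply_eq (hP : IsReflexive P) (hd : 0 < d)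
    (hV : (V : Set (Fin d → ℝ)) = P.extremePoints ℝ) {w : Fin d → ℝ} (hw : w ∈ V) :
    ∃ (b : Module.Basis (Fin d) ℝ (Fin d → ℝ)) (o : Fin d), IsFacetBasis V b ∧ b o = w := by
  have hwP : w ∈ P.extremePoints ℝ := hV.le hw
  obtain ⟨u, hu, huw⟩ := hP.exists_mem_extremePoints_polarDual hwP.1
    (notMem_interior_of_mem_extremePoints hd hwP)
  rw [← hP.1.convexHull_eq hV, polarDual_convexHull] at hu
  exact exists_isFacetBasis_of_mem_extremePoints_polarDual (Pi.basisFun ℝ (Fin d)) hu hw huw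

end Polytope

theorem stmt19_general {d : ℕ} (hd : 0 < d) (P : Set (Fin d → ℝ)) (hP : IsReflexive P)
    (hs : IsSimplicial P) (hcard : 3 * d - 1 ≤ (Set.extremePoints ℝ P).ncard)
    (V : Finset (Fin d → ℝ)) (hV : (V : Set (Fin d → ℝ)) = Set.extremePoints ℝ P)
    (hnu : (∑ v ∈ V, v) ∈ Set.extremePoints ℝ P) :
    (Even d ∧ ∃ φ : (Fin d → ℝ) ≃ₗ[ℝ] (Fin d → ℝ), Unimodular φ ∧
        φ '' P = splitModel2 d tV2v) ∨
    (Odd d ∧ ∃ φ : (Fin d → ℝ) ≃ₗ[ℝ] (Fin d → ℝ), Unimodular φ ∧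
        φ '' P = splitModel3 d Q3'v) := by
  obtain ⟨b, o, hb, ho⟩ := hP.exists_isFacetBasis_apply_eq hd hV (hV.ge hnu)
  have hVcard : 3 * d ≤ V.card + 1 := by
    rw [← hV, Set.ncard_coe_finset] at hcard
    omega
  simpa only [hP.1.convexHull_eq hV] using
    (hP.isSimplicialReflexive hs hd hV).exists_unimodular_image_eq_splitModel hVcard hb ho

/-- a `d ≥ 3`-dimensional simplicial reflexive polytope with `3d-1` vertices
such that `ν_P` is a vertex of `P` splits into `(d-2)/2` copies of `V₂` and one `Ṽ₂`
(`d` even), or into `(d-3)/2` copies of `V₂` and one `Q₃'` (`d` odd). -/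
theorem stmt19 {d : ℕ} (hd : 3 ≤ d)
    (P : Set (Fin d → ℝ)) (hP : IsReflexive P) (hs : IsSimplicial P)
    (hcard : (Set.extremePoints ℝ P).ncard = 3 * d - 1)
    (V : Finset (Fin d → ℝ)) (hV : (V : Set (Fin d → ℝ)) = Set.extremePoints ℝ P)
    (hnu : (∑ v ∈ V, v) ∈ Set.extremePoints ℝ P) :
    (Even d ∧ ∃ φ : (Fin d → ℝ) ≃ₗ[ℝ] (Fin d → ℝ), Unimodular φ ∧
        φ '' P = splitModel2 d tV2v) ∨
    (Odd d ∧ ∃ φ : (Fin d → ℝ) ≃ₗ[ℝ] (Fin d → ℝ), Unimodular φ ∧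
        φ '' P = splitModel3 d Q3'v) :=
  stmt19_general (by omega) P hP hs hcard.ge V hV hnu
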